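/- arXiv:2209.05820 — 7 statements merged into one kernel-verified Lean document; each statement's English description precedes it below -/
import Mathlib

section
/- The map φ₂ is an order automorphism of (D, ⊑). Here φ₂ sends a digraph G to the digraph on the same vertex set obtained as follows: for every pair of distinct vertices u, v such that neither u nor v carries a loop and the edges (u,v) and (v,u) are either both present or both absent, toggle both of these edges; all loops and all other adjacencies are unchanged. φ₂ is well defined on isomorphism classes and so gives a map D → D. -/
/-- A finite digraph: a finite nonempty vertex set `Fin n` with a (Bool-valued)
edge relation, loops allowed. -/
structure FinDigraph where
  n : ℕ
  pos : 0 < n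
  adj : Fin n → Fin n → Bool

namespace FinDigraph

/-- Isomorphism of finite digraphs. -/
def Iso (G H : FinDigraph) : Prop :=
  ∃ e : Fin G.n ≃ Fin H.n, ∀ u v, H.adj (e u) (e v) = G.adj u v

theorem iso_refl (G : FinDigraph) : Iso G G := ⟨Equiv.refl _, fun _ _ => rfl⟩

theorem iso_symm {G H : FinDigraph} (h : Iso G H) : Iso H G := by
  obtain ⟨e, he⟩ := h
  refine ⟨e.symm, fun u v => ?_⟩
  rw [← he (e.symm u) (e.symm v), e.apply_symm_apply, e.apply_symm_apply]

theorem iso_trans {G H K : FinDigraph} (hGH : Iso G H) (hHK : Iso H K) : Iso G K := by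
  obtain ⟨e, he⟩ := hGH
  obtain ⟨f, hf⟩ := hHK
  exact ⟨e.trans f, fun u v => (hf (e u) (e v)).trans (he u v)⟩

instance isoSetoid : Setoid FinDigraph :=
  ⟨Iso, iso_refl, fun h => iso_symm h, fun h h' => iso_trans h h'⟩

/-- `Emb G H` : `G` is isomorphic to an induced subdigraph of `H`. -/
def Emb (G H : FinDigraph) : Prop :=
  ∃ f : Fin G.n ↪ Fin H.n, ∀ u v, H.adj (f u) (f v) = G.adj u v

end FinDigraph

/-- `D`: the isomorphism classes of finite digraphs. -/
def D : Type := Quotient FinDigraph.isoSetoid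

/-- The isomorphism class of a finite digraph. -/
def toD (G : FinDigraph) : D := Quotient.mk _ G

/-- The substructure (induced subdigraph) ordering `⊑` on `D`. -/
instance : LE D :=
  ⟨fun x y => ∃ G H : FinDigraph, x = toD G ∧ y = toD H ∧ FinDigraph.Emb G H⟩

/-- An order automorphism: a bijection such that `x ≤ y ↔ f x ≤ f y`. -/
def IsOrderAuto {α : Type*} [LE α] (f : α → α) : Prop :=
  Function.Bijective f ∧ ∀ x y : α, x ≤ y ↔ f x ≤ f y

/-- φ₁ on digraphs: complement the loop status of every vertex. -/
def phi1Fn (G : FinDigraph) : FinDigraph :=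
  ⟨G.n, G.pos, fun u v => if u = v then !(G.adj u v) else G.adj u v⟩

/-- Edge reversal: transpose the edge relation. -/
def revFn (G : FinDigraph) : FinDigraph :=
  ⟨G.n, G.pos, fun u v => G.adj v u⟩

/-- φ₂ on digraphs: toggle both edges between distinct loopless vertices joined
by both or neither of the two possible edges. -/
def phi2Fn (G : FinDigraph) : FinDigraph :=
  ⟨G.n, G.pos, fun u v =>
    if u ≠ v ∧ G.adj u u = false ∧ G.adj v v = false ∧ G.adj u v = G.adj v u then
      !(G.adj u v)
    else G.adj u v⟩

/-- φ₃ on digraphs: toggle both edges between distinct looped vertices joined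
by both or neither of the two possible edges. -/
def phi3Fn (G : FinDigraph) : FinDigraph :=
  ⟨G.n, G.pos, fun u v =>
    if u ≠ v ∧ G.adj u u = true ∧ G.adj v v = true ∧ G.adj u v = G.adj v u then
      !(G.adj u v)
    else G.adj u v⟩

/-- φ₄ on digraphs: reverse the single edge between distinct loopless vertices
joined by exactly one of the two possible edges. -/
def phi4Fn (G : FinDigraph) : FinDigraph :=
  ⟨G.n, G.pos, fun u v =>
    if u ≠ v ∧ G.adj u u = false ∧ G.adj v v = false ∧ G.adj u v ≠ G.adj v u then
      G.adj v u
    else G.adj u v⟩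

/-- φ₅ on digraphs: reverse the single edge between distinct looped vertices
joined by exactly one of the two possible edges. -/
def phi5Fn (G : FinDigraph) : FinDigraph :=
  ⟨G.n, G.pos, fun u v =>
    if u ≠ v ∧ G.adj u u = true ∧ G.adj v v = true ∧ G.adj u v ≠ G.adj v u then
      G.adj v u
    else G.adj u v⟩

/-- φ_π on digraphs: for each ordered pair `(u,v)` of distinct vertices with a loop at
`u` and no loop at `v`, replace its type `(Adj(u,v), Adj(v,u)) : Bool × Bool` by `π`
applied to it; everything else is unchanged. -/
def phiPiFn (π : Equiv.Perm (Bool × Bool)) (G : FinDigraph) : FinDigraph :=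
  ⟨G.n, G.pos, fun u v =>
    if u = v then G.adj u v
    else if G.adj u u = true ∧ G.adj v v = false then (π (G.adj u v, G.adj v u)).1
    else if G.adj u u = false ∧ G.adj v v = true then (π (G.adj v u, G.adj u v)).2
    else G.adj u v⟩

/-- The number of vertices of an isomorphism class. -/
def nVerts : D → ℕ :=
  Quotient.lift (fun G : FinDigraph => G.n) (fun _ _ h => by
    obtain ⟨e, -⟩ := h
    simpa using Fintype.card_congr e)

/-- `Dn n`: the classes of digraphs with at most `n` vertices (first `n` levels). -/
def Dn (n : ℕ) : Set D := {x : D | nVerts x ≤ n}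

theorem mem_Dn_succ {n : ℕ} {x : D} (h : x ∈ Dn n) : x ∈ Dn (n + 1) :=
  le_trans h (Nat.le_succ n)

/-- The set of lower covers of `x` in `(D, ⊑)`. -/
def lcov (x : D) : Set D :=
  {y : D | y ≤ x ∧ y ≠ x ∧ ∀ z : D, y ≤ z → z ≤ x → z = y ∨ z = x}

/-- `scount x` = number of classes sharing the lower-cover set of `x`. -/
noncomputable def scount (x : D) : ℕ := Nat.card {y : D // lcov y = lcov x}

/-- `Hset m` = `{(l(G), s(G)) : G ∈ D with exactly m vertices}`. -/
def Hset (m : ℕ) : Set (Set D × ℕ) :=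
  {p : Set D × ℕ | ∃ x : D, nVerts x = m ∧ p = (lcov x, scount x)}

/-- Element-wise action of a map of `Dn n` on a subset of `Dn n`. -/
def setImage {n : ℕ} (φ : ↥(Dn n) → ↥(Dn n)) (S : Set D) : Set D :=
  {z : D | ∃ (y : D) (h : y ∈ Dn n), y ∈ S ∧ z = ↑(φ ⟨y, h⟩)}

/-- Element-wise action of a map of `Dn n` on a set of pairs `(S, k)`. -/
def HsetImage {n : ℕ} (φ : ↥(Dn n) → ↥(Dn n)) (A : Set (Set D × ℕ)) : Set (Set D × ℕ) :=
  {p : Set D × ℕ | ∃ q ∈ A, p = (setImage φ q.1, q.2)}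

/-- The swap permutation `σ(a,b) = (b,a)` of `Bool × Bool`. -/
def sigmaSwap : Equiv.Perm (Bool × Bool) := Equiv.prodComm Bool Bool

/-- Restrictions to `D₃` of order automorphisms of `(D, ⊑)`. -/
def Aut3D : Set (↥(Dn 3) → ↥(Dn 3)) :=
  {g | ∃ φ : D → D, IsOrderAuto φ ∧ ∀ x : ↥(Dn 3), (↑(g x) : D) = φ ↑x}

/-- Restrictions to `D₃` of order automorphisms of `D₄`. -/
def Aut3D4 : Set (↥(Dn 3) → ↥(Dn 3)) :=
  {g | ∃ ψ : ↥(Dn 4) → ↥(Dn 4), IsOrderAuto ψ ∧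
    ∀ x : ↥(Dn 3), (↑(g x) : D) = ↑(ψ ⟨↑x, mem_Dn_succ x.2⟩)}

/-- Restrictions to `D₃` of order automorphisms of `D₄`, as order isomorphisms of `D₃`. -/
def Aut3D4Iso : Set (↥(Dn 3) ≃o ↥(Dn 3)) :=
  {g | ∃ ψ : ↥(Dn 4) → ↥(Dn 4), IsOrderAuto ψ ∧
    ∀ x : ↥(Dn 3), ((g x : ↥(Dn 3)) : D) = ↑(ψ ⟨↑x, mem_Dn_succ x.2⟩)}

/-!
Which pairs of vertices `φ₂` toggles is determined by the subdigraph induced on the pair, so `φ₂`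
turns induced embeddings into induced embeddings. Toggling creates no loops and removes none, and
it acts on both edges of a pair at once, so the same pairs are toggled when `φ₂` is applied again:
`φ₂` is an involution, and a monotone involution is an order automorphism.
-/

theorem isOrderAuto_of_involutive {α : Type*} [LE α] {f : α → α} (hf : Function.Involutive f)
    (hmono : ∀ ⦃x y : α⦄, x ≤ y → f x ≤ f y) : IsOrderAuto f :=
  ⟨hf.bijective, fun x y => ⟨(hmono ·), fun h => by simpa only [hf x, hf y] using hmono h⟩⟩

namespace FinDigraph

/-- The pairs of vertices whose two edges `φ₂` toggles: distinct loopless vertices joined by both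
or neither of the two possible edges. -/
def IsToggled (G : FinDigraph) (u v : Fin G.n) : Prop :=
  u ≠ v ∧ G.adj u u = false ∧ G.adj v v = false ∧ G.adj u v = G.adj v u

instance (G : FinDigraph) (u v : Fin G.n) : Decidable (G.IsToggled u v) :=
  inferInstanceAs (Decidable (_ ∧ _))

section

variable {G H : FinDigraph}

theorem IsToggled.symm {u v : Fin G.n} (h : G.IsToggled u v) : G.IsToggled v u :=
  ⟨h.1.symm, h.2.2.1, h.2.1, h.2.2.2.symm⟩

theorem not_isToggled_self (u : Fin G.n) : ¬G.IsToggled u u :=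
  fun h => h.1 rfl

theorem isToggled_map_iff {f : Fin G.n → Fin H.n} (hf : Function.Injective f)
    (hadj : ∀ u v, H.adj (f u) (f v) = G.adj u v) (u v : Fin G.n) :
    H.IsToggled (f u) (f v) ↔ G.IsToggled u v := by
  simp only [IsToggled, hadj, hf.ne_iff]

theorem phi2Fn_adj (G : FinDigraph) (u v : Fin G.n) :
    (phi2Fn G).adj u v = if G.IsToggled u v then !G.adj u v else G.adj u v :=
  rfl

theorem IsToggled.phi2Fn_adj {u v : Fin G.n} (h : G.IsToggled u v) :
    (phi2Fn G).adj u v = !G.adj u v :=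
  if_pos h

theorem phi2Fn_adj_of_not_isToggled {u v : Fin G.n} (h : ¬G.IsToggled u v) :
    (phi2Fn G).adj u v = G.adj u v :=
  if_neg h

theorem phi2Fn_adj_self (G : FinDigraph) (u : Fin G.n) : (phi2Fn G).adj u u = G.adj u u :=
  phi2Fn_adj_of_not_isToggled (not_isToggled_self u)

theorem phi2Fn_adj_eq_swap_iff (G : FinDigraph) (u v : Fin G.n) :
    (phi2Fn G).adj u v = (phi2Fn G).adj v u ↔ G.adj u v = G.adj v u := by
  by_cases h : G.IsToggled u v
  · rw [h.phi2Fn_adj, h.symm.phi2Fn_adj, Bool.not_inj_iff]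
  · rw [phi2Fn_adj_of_not_isToggled h, phi2Fn_adj_of_not_isToggled (mt IsToggled.symm h)]

theorem isToggled_phi2Fn_iff (G : FinDigraph) (u v : Fin G.n) :
    (phi2Fn G).IsToggled u v ↔ G.IsToggled u v :=
  Iff.rfl.and <| (Eq.congr_left (phi2Fn_adj_self G u)).and <|
    (Eq.congr_left (phi2Fn_adj_self G v)).and (phi2Fn_adj_eq_swap_iff G u v)

theorem phi2Fn_phi2Fn_adj (G : FinDigraph) (u v : Fin G.n) :
    (phi2Fn (phi2Fn G)).adj u v = G.adj u v := by
  have htoggled := isToggled_phi2Fn_iff G u v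
  by_cases h : G.IsToggled u v
  · calc (phi2Fn (phi2Fn G)).adj u v
      _ = !(phi2Fn G).adj u v := (htoggled.2 h).phi2Fn_adj
      _ = G.adj u v := by rw [h.phi2Fn_adj, Bool.not_not]
  · calc (phi2Fn (phi2Fn G)).adj u v
      _ = (phi2Fn G).adj u v := phi2Fn_adj_of_not_isToggled (mt htoggled.1 h)
      _ = G.adj u v := phi2Fn_adj_of_not_isToggled h

theorem phi2Fn_involutive : Function.Involutive phi2Fn := fun G =>
  congrArg (FinDigraph.mk G.n G.pos) (funext₂ (phi2Fn_phi2Fn_adj G))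

theorem phi2Fn_adj_map {f : Fin G.n → Fin H.n} (hf : Function.Injective f)
    (hadj : ∀ u v, H.adj (f u) (f v) = G.adj u v) (u v : Fin G.n) :
    (phi2Fn H).adj (f u) (f v) = (phi2Fn G).adj u v := by
  simp only [phi2Fn_adj, isToggled_map_iff hf hadj, hadj]

theorem Iso.phi2Fn : Iso G H → Iso (phi2Fn G) (phi2Fn H) :=
  fun ⟨e, he⟩ => ⟨e, phi2Fn_adj_map e.injective he⟩

theorem Emb.phi2Fn : Emb G H → Emb (phi2Fn G) (phi2Fn H) :=
  fun ⟨f, hf⟩ => ⟨f, phi2Fn_adj_map f.injective hf⟩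

end

end FinDigraph

/-- The map `φ₂ : D → D` induced by `phi2Fn` on isomorphism classes. -/
def phi2 : D → D :=
  Quotient.map phi2Fn fun _ _ => FinDigraph.Iso.phi2Fn

theorem phi2_toD (G : FinDigraph) : phi2 (toD G) = toD (phi2Fn G) :=
  rfl

theorem phi2_involutive : Function.Involutive phi2 :=
  Quotient.ind fun G => congrArg toD (FinDigraph.phi2Fn_involutive G)

theorem phi2_mono ⦃x y : D⦄ : x ≤ y → phi2 x ≤ phi2 y := by
  rintro ⟨G, H, rfl, rfl, hGH⟩
  exact ⟨phi2Fn G, phi2Fn H, phi2_toD G, phi2_toD H, hGH.phi2Fn⟩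

/-- φ₂ is well defined on isomorphism classes and is an order
automorphism of `(D, ⊑)`. -/
theorem phi2_isOrderAuto :
    ∃ φ : D → D, (∀ G : FinDigraph, φ (toD G) = toD (phi2Fn G)) ∧ IsOrderAuto φ :=
  ⟨phi2, phi2_toD, isOrderAuto_of_involutive phi2_involutive phi2_mono⟩
end

section
/- The map φ₃ is an order automorphism of (D, ⊑). Here φ₃ sends a digraph G to the digraph on the same vertex set obtained as follows: for every pair of distinct vertices u, v such that both u and v carry a loop and the edges (u,v) and (v,u) are either both present or both absent, toggle both of these edges; all loops and all other adjacencies are unchanged. φ₃ is well defined on isomorphism classes and so gives a map D → D. -/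
/-!
The new adjacency of `φ₃` between two vertices depends only on the loops and edges that the two
vertices span, so `φ₃` commutes with restriction to induced subdigraphs and preserves embeddings.
As toggling twice changes nothing, `φ₃` is an involution, and hence it reflects embeddings too.
-/

open Function

namespace FinDigraph

theorem Iso.emb {G H : FinDigraph} (h : Iso G H) : Emb G H := by
  obtain ⟨e, he⟩ := h
  exact ⟨e.toEmbedding, he⟩

theorem Emb.trans {G H K : FinDigraph} (hGH : Emb G H) (hHK : Emb H K) : Emb G K := by
  obtain ⟨f, hf⟩ := hGH
  obtain ⟨g, hg⟩ := hHK
  exact ⟨f.trans g, fun u v => (hg (f u) (f v)).trans (hf u v)⟩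

theorem Emb.antisymm {G H : FinDigraph} (hGH : Emb G H) (hHG : Emb H G) : Iso G H := by
  obtain ⟨f, hf⟩ := hGH
  obtain ⟨g, -⟩ := hHG
  have hbij : Bijective f :=
    f.injective.bijective_of_nat_card_le (Nat.card_le_card_of_injective g g.injective)
  exact ⟨Equiv.ofBijective f hbij, hf⟩

/-- The local transformation of digraphs with rule `t`: for distinct `u` and `v`, the edge `(u, v)`
of the new digraph is `t (Adj(u,u)) (Adj(v,v)) (Adj(u,v)) (Adj(v,u))`; loops are kept. -/
def mapPairs (t : Bool → Bool → Bool → Bool → Bool) (G : FinDigraph) : FinDigraph :=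
  ⟨G.n, G.pos, fun u v =>
    if u = v then G.adj u v else t (G.adj u u) (G.adj v v) (G.adj u v) (G.adj v u)⟩

theorem Emb.mapPairs {G H : FinDigraph} (h : Emb G H) (t : Bool → Bool → Bool → Bool → Bool) :
    Emb (G.mapPairs t) (H.mapPairs t) := by
  obtain ⟨f, hf⟩ := h
  have adj_eq (u v : Fin G.n) : (H.mapPairs t).adj (f u) (f v) = (G.mapPairs t).adj u v := by
    simp only [FinDigraph.mapPairs, hf, f.injective.eq_iff]
  exact ⟨f, adj_eq⟩

theorem mapPairs_involutive {t : Bool → Bool → Bool → Bool → Bool}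
    (ht : ∀ l m a b, t l m (t l m a b) (t m l b a) = a) : Involutive (mapPairs t) := by
  rintro ⟨n, pos, adj⟩
  refine congrArg (mk n pos) (funext₂ fun (u v : Fin n) => ?_)
  by_cases huv : u = v
  · simp [mapPairs, huv]
  · simp [mapPairs, huv, Ne.symm huv, ht]

theorem emb_mapPairs_iff {t : Bool → Bool → Bool → Bool → Bool} (ht : Involutive (mapPairs t))
    {G H : FinDigraph} : Emb (G.mapPairs t) (H.mapPairs t) ↔ Emb G H :=
  ⟨fun h => by simpa only [ht G, ht H] using h.mapPairs t, fun h => h.mapPairs t⟩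

/-- The rule of `φ₃` in the sense of `FinDigraph.mapPairs`: `l` and `m` are the loops at the two
vertices, `a` and `b` the edges between them. -/
def toggleLooped (l m a b : Bool) : Bool :=
  if l = true ∧ m = true ∧ a = b then !a else a

theorem mapPairs_toggleLooped (G : FinDigraph) : G.mapPairs toggleLooped = phi3Fn G := by
  refine congrArg (mk G.n G.pos) (funext₂ fun (u v : Fin G.n) => ?_)
  by_cases huv : u = v <;> simp [toggleLooped, huv]

theorem mapPairs_toggleLooped_involutive : Involutive (mapPairs toggleLooped) :=
  mapPairs_involutive (by decide)

end FinDigraph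

open FinDigraph

theorem toD_le_toD_iff {G H : FinDigraph} : toD G ≤ toD H ↔ Emb G H := by
  refine ⟨?_, fun h => ⟨G, H, rfl, rfl, h⟩⟩
  rintro ⟨G', H', hG, hH, h⟩
  exact ((Quotient.exact hG).emb.trans h).trans (Quotient.exact hH.symm).emb

theorem toD_eq_toD_iff {G H : FinDigraph} : toD G = toD H ↔ Emb G H ∧ Emb H G :=
  ⟨fun h => ⟨(Quotient.exact h).emb, (Quotient.exact h.symm).emb⟩,
    fun h => Quotient.sound (h.1.antisymm h.2)⟩

theorem exists_isOrderAuto_of_emb_iff {F : FinDigraph → FinDigraph} (hF : Surjective F)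
    (hemb : ∀ {G H}, Emb (F G) (F H) ↔ Emb G H) :
    ∃ φ : D → D, (∀ G, φ (toD G) = toD (F G)) ∧ IsOrderAuto φ := by
  have eq_iff {G H : FinDigraph} : toD (F G) = toD (F H) ↔ toD G = toD H := by
    simp only [toD_eq_toD_iff, hemb]
  let φ : D → D := Quotient.lift (fun G => toD (F G)) fun _ _ h => eq_iff.mpr (Quotient.sound h)
  refine ⟨φ, fun _ => rfl, ⟨?injective, ?surjective⟩, ?le_iff⟩
  case injective =>
    rintro ⟨G⟩ ⟨H⟩ h
    exact eq_iff.mp h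
  case surjective =>
    rintro ⟨H⟩
    obtain ⟨G, rfl⟩ := hF H
    exact ⟨toD G, rfl⟩
  case le_iff =>
    rintro ⟨G⟩ ⟨H⟩
    exact toD_le_toD_iff.trans (hemb.symm.trans toD_le_toD_iff.symm)

/-- φ₃ is well defined on isomorphism classes and is an order
automorphism of `(D, ⊑)`. -/
theorem phi3_isOrderAuto :
    ∃ φ : D → D, (∀ G : FinDigraph, φ (toD G) = toD (phi3Fn G)) ∧ IsOrderAuto φ := by
  simp only [← mapPairs_toggleLooped]
  have hinv := mapPairs_toggleLooped_involutive
  exact exists_isOrderAuto_of_emb_iff hinv.surjective (emb_mapPairs_iff hinv)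
end

section
/- For every permutation π of Bool × Bool, the map φ_π is an order automorphism of (D, ⊑). Here, for a digraph G and an ordered pair (u,v) of distinct vertices where u carries a loop and v does not, the type of the pair is (Adj(u,v), Adj(v,u)) ∈ Bool × Bool; φ_π sends G to the digraph on the same vertex set in which the type of every such pair is replaced by π applied to its type, while all loops and all adjacencies between pairs of vertices not of this form (both looped or both loopless) are unchanged. φ_π is well defined on isomorphism classes and so gives a map D → D. -/
/-! `φ_π` leaves every loop in place, so the pairs it acts on in `G` are the same as in `φ_π(G)`,
and there `φ_{π⁻¹}` undoes it. Since the new edges between `u` and `v` depend only on the subdigraph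
induced on `{u, v}`, both operations commute with induced embeddings, hence descend to mutually
inverse order-preserving maps of `D`. -/

theorem isOrderAuto_of_inverse {α : Type*} [LE α] {f g : α → α}
    (hgf : Function.LeftInverse g f) (hfg : Function.RightInverse g f)
    (hf : ∀ ⦃x y⦄, x ≤ y → f x ≤ f y) (hg : ∀ ⦃x y⦄, x ≤ y → g x ≤ g y) :
    IsOrderAuto f := by
  refine ⟨⟨hgf.injective, hfg.surjective⟩, fun x y => ⟨fun h => hf h, fun h => ?_⟩⟩
  simpa only [hgf x, hgf y] using hg h

section phiPiFn

variable (π : Equiv.Perm (Bool × Bool)) {G H : FinDigraph}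

theorem phiPiFn_adj_of_loop_eq {u v : Fin G.n} (h : G.adj u u = G.adj v v) :
    (phiPiFn π G).adj u v = G.adj u v := by
  cases hv : G.adj v v <;> simp [phiPiFn, h, hv]

theorem phiPiFn_adj_self (u : Fin G.n) : (phiPiFn π G).adj u u = G.adj u u :=
  phiPiFn_adj_of_loop_eq π rfl

theorem phiPiFn_adj_pair {u v : Fin G.n} (hu : G.adj u u = true) (hv : G.adj v v = false) :
    ((phiPiFn π G).adj u v, (phiPiFn π G).adj v u) = π (G.adj u v, G.adj v u) := by
  have huv : u ≠ v := by
    rintro rfl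
    simp [hu] at hv
  simp [phiPiFn, hu, hv, huv, huv.symm]

theorem phiPiFn_symm_phiPiFn (G : FinDigraph) : phiPiFn π.symm (phiPiFn π G) = G := by
  have pair_eq {u v : Fin G.n} (hu : G.adj u u = true) (hv : G.adj v v = false) :
      ((phiPiFn π.symm (phiPiFn π G)).adj u v, (phiPiFn π.symm (phiPiFn π G)).adj v u) =
        (G.adj u v, G.adj v u) := by
    rw [phiPiFn_adj_pair π.symm ((phiPiFn_adj_self π u).trans hu)
      ((phiPiFn_adj_self π v).trans hv), phiPiFn_adj_pair π hu hv, π.symm_apply_apply]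
  refine congrArg (FinDigraph.mk G.n G.pos) (funext₂ fun (u v : Fin G.n) => ?_)
  cases hu : G.adj u u <;> cases hv : G.adj v v
  case false.true => exact congrArg Prod.snd (pair_eq hv hu)
  case true.false => exact congrArg Prod.fst (pair_eq hu hv)
  all_goals
    have loop_eq : G.adj u u = G.adj v v := hu.trans hv.symm
    have loop_eq' : (phiPiFn π G).adj u u = (phiPiFn π G).adj v v :=
      (phiPiFn_adj_self π u).trans (loop_eq.trans (phiPiFn_adj_self π v).symm)
    exact (phiPiFn_adj_of_loop_eq π.symm loop_eq').trans (phiPiFn_adj_of_loop_eq π loop_eq)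

theorem phiPiFn_adj_apply {f : Fin G.n → Fin H.n} (hinj : Function.Injective f)
    (hf : ∀ u v, H.adj (f u) (f v) = G.adj u v) (u v : Fin G.n) :
    (phiPiFn π H).adj (f u) (f v) = (phiPiFn π G).adj u v := by
  simp only [phiPiFn, hinj.eq_iff, hf]

theorem FinDigraph.Emb.phiPiFn (h : Emb G H) : Emb (phiPiFn π G) (phiPiFn π H) :=
  let ⟨f, hf⟩ := h
  ⟨f, phiPiFn_adj_apply π f.injective hf⟩

theorem FinDigraph.Iso.phiPiFn (h : Iso G H) : Iso (phiPiFn π G) (phiPiFn π H) :=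
  let ⟨e, he⟩ := h
  ⟨e, phiPiFn_adj_apply π e.injective he⟩

end phiPiFn

section phiPi

variable (π : Equiv.Perm (Bool × Bool))

/-- The map `φ_π : D → D` induced by `phiPiFn π` on isomorphism classes. -/
def phiPi : D → D :=
  Quotient.map (phiPiFn π) fun _ _ h => h.phiPiFn π

theorem phiPi_toD (G : FinDigraph) : phiPi π (toD G) = toD (phiPiFn π G) :=
  rfl

theorem phiPi_le_phiPi ⦃x y : D⦄ (h : x ≤ y) : phiPi π x ≤ phiPi π y := by
  obtain ⟨G, H, rfl, rfl, hGH⟩ := h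
  exact ⟨phiPiFn π G, phiPiFn π H, phiPi_toD π G, phiPi_toD π H, hGH.phiPiFn π⟩

theorem phiPi_symm_leftInverse : Function.LeftInverse (phiPi π.symm) (phiPi π) :=
  Quotient.ind fun G => congrArg toD (phiPiFn_symm_phiPiFn π G)

end phiPi

/-- for every permutation `π` of `Bool × Bool`, the map φ_π is well
defined on isomorphism classes and is an order automorphism of `(D, ⊑)`. -/
theorem phiPi_isOrderAuto (π : Equiv.Perm (Bool × Bool)) :
    ∃ φ : D → D, (∀ G : FinDigraph, φ (toD G) = toD (phiPiFn π G)) ∧ IsOrderAuto φ :=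
  ⟨phiPi π, phiPi_toD π, isOrderAuto_of_inverse (phiPi_symm_leftInverse π)
    (phiPi_symm_leftInverse π.symm) (phiPi_le_phiPi π) (phiPi_le_phiPi π.symm)⟩
end

section
/- Let σ be the permutation of Bool × Bool given by σ(a,b) = (b,a). Then for every permutation π of Bool × Bool, as maps D → D one has φ₁ ∘ φ_π ∘ φ₁ = φ_{σ∘π∘σ}. Here φ₁ complements the loop status of every vertex; for a pair (u,v) of distinct vertices where u carries a loop and v does not, the type of the pair is (Adj(u,v), Adj(v,u)) ∈ Bool × Bool, and φ_π replaces the type of every such pair by π applied to its type, leaving all loops and all other adjacencies unchanged; each map is well defined on isomorphism classes. -/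
/-!
Read from its looped end, a pair with exactly one loop is changed by `φ_π` through `π`; read from
its loopless end, it is changed through `σ ∘ π ∘ σ`. Since `φ₁` exchanges the looped and loopless
ends of every such pair and keeps the types of all pairs of distinct vertices, conjugating `φ_π` by
`φ₁` replaces `π` by `σ ∘ π ∘ σ`. The identity already holds before passing to classes.
-/

theorem toD_surjective : Function.Surjective toD := Quotient.mk_surjective

theorem sigmaSwap_mul_self : sigmaSwap * sigmaSwap = 1 := rfl

theorem sigmaSwap_conj_conj (π : Equiv.Perm (Bool × Bool)) :
    sigmaSwap * (sigmaSwap * π * sigmaSwap) * sigmaSwap = π := by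
  simp only [← mul_assoc, sigmaSwap_mul_self, one_mul]
  rw [mul_assoc, sigmaSwap_mul_self, mul_one]

namespace FinDigraph

/-- The type `(Adj(u,v), Adj(v,u))` of the ordered pair `(u, v)`, the argument on which the
permutations `π` and `σ` act. It is defined for all `u` and `v`, whatever their loops. -/
def pairType (G : FinDigraph) (u v : Fin G.n) : Bool × Bool :=
  (G.adj u v, G.adj v u)

variable (π : Equiv.Perm (Bool × Bool)) (G : FinDigraph) {u v : Fin G.n}

theorem sigmaSwap_pairType (u v : Fin G.n) : sigmaSwap (G.pairType u v) = G.pairType v u :=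
  rfl

theorem adj_phi1Fn_self (u : Fin G.n) : (phi1Fn G).adj u u = !G.adj u u :=
  if_pos rfl

theorem pairType_phi1Fn_of_ne (huv : u ≠ v) : (phi1Fn G).pairType u v = G.pairType u v :=
  Prod.ext (if_neg huv) (if_neg huv.symm)

theorem adj_phiPiFn_self (u : Fin G.n) : (phiPiFn π G).adj u u = G.adj u u :=
  if_pos rfl

variable {G}

theorem pairType_phiPiFn_of_adj_self_eq (h : G.adj u u = G.adj v v) :
    (phiPiFn π G).pairType u v = G.pairType u v := by
  cases hv : G.adj v v <;> simp [pairType, phiPiFn, h, hv]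

theorem pairType_phiPiFn_of_loop_left (hu : G.adj u u = true) (hv : G.adj v v = false) :
    (phiPiFn π G).pairType u v = π (G.pairType u v) := by
  have huv : u ≠ v := by
    rintro rfl
    simp [hu] at hv
  simp [pairType, phiPiFn, hu, hv, huv, huv.symm]

theorem pairType_phiPiFn_of_loop_right (hu : G.adj u u = false) (hv : G.adj v v = true) :
    (phiPiFn π G).pairType u v = (sigmaSwap * π * sigmaSwap) (G.pairType u v) :=
  calc (phiPiFn π G).pairType u v
    _ = sigmaSwap ((phiPiFn π G).pairType v u) := (sigmaSwap_pairType (phiPiFn π G) v u).symm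
    _ = sigmaSwap (π (G.pairType v u)) :=
      congrArg sigmaSwap (pairType_phiPiFn_of_loop_left π hv hu)
    _ = sigmaSwap (π (sigmaSwap (G.pairType u v))) := by rw [sigmaSwap_pairType]

theorem pairType_phiPiFn_phi1Fn_of_ne (huv : u ≠ v) :
    (phiPiFn π (phi1Fn G)).pairType u v =
      (phiPiFn (sigmaSwap * π * sigmaSwap) G).pairType u v := by
  have type_eq : (phi1Fn G).pairType u v = G.pairType u v := pairType_phi1Fn_of_ne G huv
  have loop_u : (phi1Fn G).adj u u = !G.adj u u := adj_phi1Fn_self G u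
  have loop_v : (phi1Fn G).adj v v = !G.adj v v := adj_phi1Fn_self G v
  by_cases same_loops : G.adj u u = G.adj v v
  · rw [pairType_phiPiFn_of_adj_self_eq _ same_loops, ← type_eq]
    exact pairType_phiPiFn_of_adj_self_eq π (by rw [loop_u, loop_v, same_loops])
  have loop_v_ne : G.adj v v = !G.adj u u := Bool.eq_not.mpr (Ne.symm same_loops)
  cases hu : G.adj u u with
  | false =>
    have hv : G.adj v v = true := by rw [loop_v_ne, hu, Bool.not_false]
    rw [pairType_phiPiFn_of_loop_right _ hu hv, sigmaSwap_conj_conj, ← type_eq]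
    exact pairType_phiPiFn_of_loop_left π (by rw [loop_u, hu, Bool.not_false])
      (by rw [loop_v, hv, Bool.not_true])
  | true =>
    have hv : G.adj v v = false := by rw [loop_v_ne, hu, Bool.not_true]
    rw [pairType_phiPiFn_of_loop_left _ hu hv, ← type_eq]
    exact pairType_phiPiFn_of_loop_right π (by rw [loop_u, hu, Bool.not_true])
      (by rw [loop_v, hv, Bool.not_false])

variable (G) in
theorem phi1Fn_phiPiFn_phi1Fn :
    phi1Fn (phiPiFn π (phi1Fn G)) = phiPiFn (sigmaSwap * π * sigmaSwap) G := by
  refine congrArg (FinDigraph.mk G.n G.pos) (funext₂ fun u v => ?_)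
  by_cases huv : u = v
  · subst huv
    calc (phi1Fn (phiPiFn π (phi1Fn G))).adj u u
      _ = !(phiPiFn π (phi1Fn G)).adj u u := adj_phi1Fn_self _ u
      _ = !(phi1Fn G).adj u u := congrArg not (adj_phiPiFn_self π (phi1Fn G) u)
      _ = !!G.adj u u := congrArg not (adj_phi1Fn_self G u)
      _ = G.adj u u := Bool.not_not _
      _ = (phiPiFn (sigmaSwap * π * sigmaSwap) G).adj u u := (adj_phiPiFn_self _ G u).symm
  · exact congrArg Prod.fst <|
      (pairType_phi1Fn_of_ne _ huv).trans (pairType_phiPiFn_phi1Fn_of_ne π huv)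

end FinDigraph

/-- as maps `D → D`, `φ₁ ∘ φ_π ∘ φ₁ = φ_{σ∘π∘σ}` where `σ(a,b) = (b,a)`. -/
theorem phi1_phiPi_phi1_eq (π : Equiv.Perm (Bool × Bool)) (f1 fP fP' : D → D)
    (h1 : ∀ G : FinDigraph, f1 (toD G) = toD (phi1Fn G))
    (hP : ∀ G : FinDigraph, fP (toD G) = toD (phiPiFn π G))
    (hP' : ∀ G : FinDigraph, fP' (toD G) = toD (phiPiFn (sigmaSwap * π * sigmaSwap) G)) :
    f1 ∘ fP ∘ f1 = fP' := by
  funext x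
  obtain ⟨G, rfl⟩ := toD_surjective x
  calc f1 (fP (f1 (toD G)))
    _ = toD (phi1Fn (phiPiFn π (phi1Fn G))) := by rw [h1, hP, h1]
    _ = toD (phiPiFn (sigmaSwap * π * sigmaSwap) G) := by rw [FinDigraph.phi1Fn_phiPiFn_phi1Fn]
    _ = fP' (toD G) := (hP' G).symm
end

section
/- The subgroup C of the group of order automorphisms of (D, ⊑) generated by φ₁, φ₂, φ₃, φ₄, φ₅ together with all φ_π (π a permutation of Bool × Bool) has exactly 768 elements. -/
/-!
Every generator acts locally: it permutes the two loop statuses, and it permutes the four types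
`(adj u v, adj v u)` of pairs of distinct vertices, by a permutation that depends only on the loop
statuses of `u` and `v`. Conversely, consider the group of all such local rules, subject only to
consistency under exchanging `u` and `v`. This constrains the permutation for two vertices with
equal loop status to the centralizer of the transposition `(a, b) ↦ (b, a)` in `S₄`, which consists
of the products of "toggle both edges" and "reverse the single edge"; the permutation for a looped
and a loopless vertex is arbitrary. So the generators generate all local rules, and there are
`2 · 4 · 4 · 24 = 768` of them.

Distinct rules act differently on isomorphism classes. Digraphs with two vertices do not suffice to
see this, as a single edge between vertices of equal loop status is isomorphic to its reverse;
three-vertex stars do.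
-/

namespace FinDigraph

theorem mk_eq_mk_of_adj_eq {n : ℕ} {hn : 0 < n} {a b : Fin n → Fin n → Bool}
    (h : ∀ u v, a u v = b u v) : mk n hn a = mk n hn b :=
  congrArg (mk n hn) (funext₂ h)

end FinDigraph

theorem toD_eq_toD {G H : FinDigraph} : toD G = toD H ↔ G.Iso H :=
  Quotient.eq

/-- A local rule for rewriting digraphs: `loop` acts on the loop status of each vertex, and
`pair c d` acts on the type `(adj u v, adj v u)` of each pair of distinct vertices `u`, `v` with
loop statuses `c`, `d`. The field `pair_swap` says that the outcome does not depend on whether one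
looks at `(u, v)` or at `(v, u)`. -/
@[ext]
structure Recoding where
  loop : Equiv.Perm Bool
  pair : Bool → Bool → Equiv.Perm (Bool × Bool)
  pair_swap : ∀ c d p, pair d c p.swap = (pair c d p).swap

namespace Recoding

instance : One Recoding := ⟨⟨1, 1, fun _ _ _ => rfl⟩⟩

instance : Mul Recoding where
  mul r s :=
    { loop := r.loop * s.loop
      pair := fun c d => r.pair (s.loop c) (s.loop d) * s.pair c d
      pair_swap := fun c d p => by simp only [Equiv.Perm.mul_apply, pair_swap] }

instance : Inv Recoding where
  inv r :=
    { loop := r.loop⁻¹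
      pair := fun c d => (r.pair (r.loop⁻¹ c) (r.loop⁻¹ d))⁻¹
      pair_swap := fun c d p => by
        rw [Equiv.Perm.inv_eq_iff_eq, pair_swap]
        exact congrArg Prod.swap (Equiv.apply_symm_apply _ p).symm }

@[simp] theorem loop_one : (1 : Recoding).loop = 1 := rfl

@[simp] theorem pair_one (c d : Bool) : (1 : Recoding).pair c d = 1 := rfl

@[simp] theorem loop_mul (r s : Recoding) : (r * s).loop = r.loop * s.loop := rfl

@[simp] theorem pair_mul (r s : Recoding) (c d : Bool) :
    (r * s).pair c d = r.pair (s.loop c) (s.loop d) * s.pair c d := rfl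

@[simp] theorem loop_inv (r : Recoding) : r⁻¹.loop = r.loop⁻¹ := rfl

@[simp] theorem pair_inv (r : Recoding) (c d : Bool) :
    r⁻¹.pair c d = (r.pair (r.loop⁻¹ c) (r.loop⁻¹ d))⁻¹ := rfl

theorem ext_pair {r s : Recoding} (hloop : r.loop = s.loop)
    (hpair : ∀ c d, r.pair c d = s.pair c d) : r = s :=
  Recoding.ext hloop (funext₂ hpair)

instance : Group Recoding :=
  Group.ofLeftAxioms
    (fun _ _ _ => ext_pair (by simp [mul_assoc]) (by simp [mul_assoc]))
    (fun _ => ext_pair (by simp) (by simp))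
    (fun _ => ext_pair (by simp) (by simp))

section Action

instance : SMul Recoding FinDigraph where
  smul r G :=
    ⟨G.n, G.pos, fun u v =>
      if u = v then r.loop (G.adj u u)
      else (r.pair (G.adj u u) (G.adj v v) (G.adj u v, G.adj v u)).1⟩

variable (r : Recoding) (G : FinDigraph)

theorem smul_adj (u v : Fin G.n) :
    (r • G).adj u v = if u = v then r.loop (G.adj u u)
      else (r.pair (G.adj u u) (G.adj v v) (G.adj u v, G.adj v u)).1 := rfl

theorem smul_adj_self (u : Fin G.n) : (r • G).adj u u = r.loop (G.adj u u) :=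
  if_pos rfl

theorem smul_adj_pair {u v : Fin G.n} (huv : u ≠ v) :
    ((r • G).adj u v, (r • G).adj v u) =
      r.pair (G.adj u u) (G.adj v v) (G.adj u v, G.adj v u) := by
  have hswap := r.pair_swap (G.adj u u) (G.adj v v) (G.adj u v, G.adj v u)
  rw [smul_adj, smul_adj, if_neg huv, if_neg huv.symm]
  exact Prod.ext rfl (congrArg Prod.fst hswap)

instance : MulAction Recoding FinDigraph where
  one_smul G := FinDigraph.mk_eq_mk_of_adj_eq fun u v => by
    by_cases huv : u = v <;> simp [huv]
  mul_smul r s G := FinDigraph.mk_eq_mk_of_adj_eq fun u v => by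
    by_cases huv : u = v
    · subst huv
      simp [smul_adj_self]
    · simp [huv, smul_adj_self, smul_adj_pair s G huv]

variable {G} in
theorem smul_adj_comp {H : FinDigraph} {f : Fin G.n → Fin H.n} (hf : Function.Injective f)
    (hadj : ∀ u v, H.adj (f u) (f v) = G.adj u v) (u v : Fin G.n) :
    (r • H).adj (f u) (f v) = (r • G).adj u v := by
  simp only [smul_adj, hadj, hf.eq_iff]

instance : MulAction Recoding D where
  smul r := Quotient.map (r • ·) fun _ _ ⟨e, he⟩ => ⟨e, smul_adj_comp r e.injective he⟩
  one_smul := Quotient.ind fun G => congrArg toD (one_smul Recoding G)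
  mul_smul r s := Quotient.ind fun G => congrArg toD (mul_smul r s G)

theorem smul_le_smul {x y : D} (hxy : x ≤ y) : r • x ≤ r • y := by
  obtain ⟨G, H, rfl, rfl, f, hf⟩ := hxy
  exact ⟨r • G, r • H, rfl, rfl, f, smul_adj_comp r f.injective hf⟩

end Action

/-- The action of recodings on `D` by order automorphisms. -/
def toOrderIso : Recoding →* (D ≃o D) where
  toFun r :=
    { MulAction.toPerm r with
      map_rel_iff' := fun {x y} =>
        ⟨fun h => by simpa using smul_le_smul r⁻¹ h, smul_le_smul r⟩ }
  map_one' := RelIso.ext (one_smul Recoding)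
  map_mul' r s := RelIso.ext (mul_smul r s)

theorem toOrderIso_toD (r : Recoding) (G : FinDigraph) :
    toOrderIso r (toD G) = toD (r • G) := rfl

theorem eq_toOrderIso {g : D ≃o D} {φ : FinDigraph → FinDigraph} {r : Recoding}
    (hg : ∀ G, g (toD G) = toD (φ G)) (hφ : ∀ G, φ G = r • G) : g = toOrderIso r :=
  RelIso.ext <| Quotient.ind fun G => (hg G).trans (congrArg toD (hφ G))

section Faithful

/-- The digraph with a hub `0` of loop status `c` and two leaves `1`, `2` of loop status `d`, where
`p` is the type of each pair (hub, leaf), and `s` tells whether the leaves are joined in both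
directions or not at all. -/
def star (c d : Bool) (p : Bool × Bool) (s : Bool) : FinDigraph :=
  ⟨3, by decide, fun u v =>
    if u = v then if u = 0 then c else d
    else if u = 0 then p.1
    else if v = 0 then p.2
    else s⟩

theorem smul_star (r : Recoding) (c d : Bool) (p : Bool × Bool) (s : Bool) :
    r • star c d p s =
      star (r.loop c) (r.loop d) (r.pair c d p) (r.pair d d (s, s)).1 := by
  have hswap : r.pair d c (p.2, p.1) = (r.pair c d p).swap := r.pair_swap c d p
  refine FinDigraph.mk_eq_mk_of_adj_eq fun u v => ?_
  fin_cases u <;> fin_cases v <;> simp [star, hswap]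

theorem star_data_eq_of_toD_eq {c c' d d' s s' : Bool} {p p' : Bool × Bool}
    (h : toD (star c d p s) = toD (star c' d' p' s')) : c = c' ∧ d = d' ∧ p = p' := by
  obtain ⟨e, he⟩ : ∃ e : Equiv.Perm (Fin 3), ∀ u v,
    (star c' d' p' s').adj (e u) (e v) = (star c d p s).adj u v := toD_eq_toD.mp h
  -- If `e` moves the hub, it sends a leaf `i` to the hub and the third vertex `j` to a leaf. So the
  -- pair of the two leaves in the first star has the type of a pair (hub, leaf) in the second.
  by_cases hub : e 0 = 0
  · have leaf : e 1 ≠ 0 := hub ▸ e.injective.ne (by decide)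
    have hc : c' = c := by simpa [star, hub] using he 0 0
    have hd : d' = d := by simpa [star, leaf] using he 1 1
    have hp₁ : p'.1 = p.1 := by simpa [star, hub, leaf.symm] using he 0 1
    have hp₂ : p'.2 = p.2 := by simpa [star, hub, leaf] using he 1 0
    exact ⟨hc.symm, hd.symm, Prod.ext hp₁.symm hp₂.symm⟩
  · obtain ⟨i, hi⟩ := e.surjective 0
    have hi0 : i ≠ 0 := fun h => hub (h ▸ hi)
    obtain ⟨j, hj0, hji⟩ := Fin.exists_ne_and_ne_of_two_lt 0 i (by decide)
    have hj : e j ≠ 0 := hi ▸ e.injective.ne hji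
    have hc : d' = c := by simpa [star, hub] using he 0 0
    have hci : c' = d := by simpa [star, hi, hi0] using he i i
    have hd : d' = d := by simpa [star, hj, hj0] using he j j
    have hp₁ : p'.2 = p.1 := by simpa [star, hi, hi0.symm, hub] using he 0 i
    have hp₂ : p'.1 = p.2 := by simpa [star, hi, hi0, Ne.symm hub] using he i 0
    have hs₁ : p'.1 = s := by simpa [star, hi, hi0, hj.symm, hj0, hji.symm] using he i j
    have hs₂ : p'.2 = s := by simpa [star, hi, hi0, hj, hj0, hji] using he j i
    exact ⟨(hci.trans (hd.symm.trans hc)).symm, hd.symm,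
      Prod.ext (hp₁.symm.trans (hs₂.trans hs₁.symm)) (hp₂.symm.trans (hs₁.trans hs₂.symm))⟩

theorem toOrderIso_injective : Function.Injective toOrderIso := by
  refine (injective_iff_map_eq_one toOrderIso).mpr fun r hr => ?_
  have hfix (c d : Bool) (p : Bool × Bool) : r.loop c = c ∧ r.loop d = d ∧ r.pair c d p = p := by
    have hstar := DFunLike.congr_fun hr (toD (star c d p false))
    rw [toOrderIso_toD, smul_star] at hstar
    exact star_data_eq_of_toD_eq hstar
  exact ext_pair (Equiv.ext fun c => (hfix c c (c, c)).1)
    fun c d => Equiv.ext fun p => (hfix c d p).2.2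

end Faithful

section Generators

/-- The permutations of pair types that may be applied to the pairs of two loopless, or of two
looped, vertices. -/
abbrev SwapCentralizer : Subgroup (Equiv.Perm (Bool × Bool)) :=
  Subgroup.centralizer {sigmaSwap}

theorem mem_swapCentralizer {a : Equiv.Perm (Bool × Bool)} :
    a ∈ SwapCentralizer ↔ ∀ p : Bool × Bool, a p.swap = (a p).swap := by
  rw [Subgroup.mem_centralizer_singleton_iff, Equiv.ext_iff]
  rfl

/-- Exchange "joined in both directions" with "not joined". -/
def symmToggle : SwapCentralizer :=
  ⟨Equiv.swap (false, false) (true, true), mem_swapCentralizer.mpr (by decide)⟩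

/-- Reverse single edges. -/
def reversal : SwapCentralizer :=
  ⟨sigmaSwap, mem_swapCentralizer.mpr fun _ => rfl⟩

theorem swapCentralizer_cases (a : SwapCentralizer) :
    a = 1 ∨ a = symmToggle ∨ a = reversal ∨ a = symmToggle * reversal := by
  have hperm : ∀ b : Equiv.Perm (Bool × Bool), (∀ p, b p.swap = (b p).swap) →
      b = 1 ∨ b = symmToggle ∨ b = reversal ∨ b = symmToggle * reversal := by decide
  simp only [Subtype.ext_iff]
  exact hperm a (mem_swapCentralizer.mp a.2)

theorem card_swapCentralizer : Nat.card SwapCentralizer = 4 := by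
  have huniv : (Set.univ : Set SwapCentralizer) =
      ({1, symmToggle, reversal, symmToggle * reversal} : Finset SwapCentralizer) := by
    ext a
    simpa using swapCentralizer_cases a
  rw [← Set.ncard_univ, huniv, Set.ncard_coe_finset]
  decide

/-- The recodings that change only loop statuses. -/
def ofLoop : Equiv.Perm Bool →* Recoding where
  toFun e := ⟨e, 1, fun _ _ _ => rfl⟩
  map_one' := rfl
  map_mul' _ _ := rfl

/-- The recodings that keep loop statuses: in `(a, b, π)`, the first two components act on pairs of
loopless and of looped vertices, and `π` on pairs of a looped and a loopless vertex, in this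
order. -/
def ofPairs : SwapCentralizer × SwapCentralizer × Equiv.Perm (Bool × Bool) →* Recoding where
  toFun x :=
    { loop := 1
      pair := fun c d =>
        match c, d with
        | false, false => x.1
        | true, true => x.2.1
        | true, false => x.2.2
        | false, true => MulAut.conj sigmaSwap x.2.2
      pair_swap := by
        rintro (_ | _) (_ | _) p
        exacts [mem_swapCentralizer.mp x.1.2 p, by simp [sigmaSwap], by simp [sigmaSwap],
          mem_swapCentralizer.mp x.2.1.2 p] }
  map_one' := ext_pair rfl (by rintro (_ | _) (_ | _) <;> rfl)
  map_mul' x y := ext_pair rfl (by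
    rintro (_ | _) (_ | _)
    exacts [rfl, map_mul (MulAut.conj sigmaSwap) x.2.2 y.2.2, rfl, rfl])

@[simp] theorem loop_ofLoop (e : Equiv.Perm Bool) : (ofLoop e).loop = e := rfl

@[simp] theorem pair_ofLoop (e : Equiv.Perm Bool) (c d : Bool) : (ofLoop e).pair c d = 1 := rfl

section ofPairs

variable (x : SwapCentralizer × SwapCentralizer × Equiv.Perm (Bool × Bool))

@[simp] theorem loop_ofPairs : (ofPairs x).loop = 1 := rfl

@[simp] theorem pair_ofPairs_false_false : (ofPairs x).pair false false = x.1 := rfl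

@[simp] theorem pair_ofPairs_true_true : (ofPairs x).pair true true = x.2.1 := rfl

@[simp] theorem pair_ofPairs_true_false : (ofPairs x).pair true false = x.2.2 := rfl

@[simp] theorem pair_ofPairs_false_true :
    (ofPairs x).pair false true = MulAut.conj sigmaSwap x.2.2 := rfl

end ofPairs

/-- A recoding is a permutation of the loop statuses together with a permutation of pair types for
each unordered pair of loop statuses. -/
def equivProd :
    Equiv.Perm Bool × SwapCentralizer × SwapCentralizer × Equiv.Perm (Bool × Bool) ≃ Recoding where
  toFun x := ofLoop x.1 * ofPairs x.2
  invFun r :=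
    (r.loop, ⟨r.pair false false, mem_swapCentralizer.mpr (r.pair_swap false false)⟩,
      ⟨r.pair true true, mem_swapCentralizer.mpr (r.pair_swap true true)⟩, r.pair true false)
  left_inv _ := rfl
  right_inv r := ext_pair rfl (by
    rintro (_ | _) (_ | _)
    exacts [rfl, Equiv.ext fun p => (r.pair_swap true false p.swap).symm, rfl, rfl])

theorem card_recoding : Nat.card Recoding = 768 := by
  rw [← Nat.card_congr equivProd]
  simp only [Nat.card_prod, card_swapCentralizer, Nat.card_perm,
    Nat.card_eq_fintype_card (α := Bool)]
  rfl

/-- The recodings of pairs of loopless vertices. -/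
def loopless : SwapCentralizer →* Recoding :=
  ofPairs.comp (MonoidHom.inl _ _)

/-- The recodings of pairs of looped vertices. -/
def looped : SwapCentralizer →* Recoding :=
  ofPairs.comp ((MonoidHom.inr _ _).comp (MonoidHom.inl _ _))

/-- The recodings of pairs of a looped and a loopless vertex. -/
def mixed : Equiv.Perm (Bool × Bool) →* Recoding :=
  ofPairs.comp ((MonoidHom.inr _ _).comp (MonoidHom.inr _ _))

/-- The recodings that induce `φ₁, …, φ₅` and all `φ_π`. -/
def generators : Set Recoding :=
  {ofLoop Equiv.boolNot, loopless symmToggle, looped symmToggle, loopless reversal,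
    looped reversal} ∪ Set.range mixed

theorem map_swapCentralizer_mem {G : Type*} [Group G] {H : Subgroup G} (f : SwapCentralizer →* G)
    (htoggle : f symmToggle ∈ H) (hreversal : f reversal ∈ H) (a : SwapCentralizer) :
    f a ∈ H := by
  rcases swapCentralizer_cases a with rfl | rfl | rfl | rfl
  exacts [map_one f ▸ H.one_mem, htoggle, hreversal, map_mul f _ _ ▸ H.mul_mem htoggle hreversal]

theorem ofPairs_eq_mul (a b : SwapCentralizer) (π : Equiv.Perm (Bool × Bool)) :
    ofPairs (a, b, π) = loopless a * looped b * mixed π := by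
  simp [loopless, looped, mixed, ← map_mul]

theorem closure_generators : Subgroup.closure generators = ⊤ := by
  have hgen {r : Recoding} (hr : r ∈ generators) : r ∈ Subgroup.closure generators :=
    Subgroup.subset_closure hr
  have hloop (e : Equiv.Perm Bool) : ofLoop e ∈ Subgroup.closure generators := by
    obtain rfl | rfl : e = 1 ∨ e = Equiv.boolNot := by revert e; decide
    exacts [map_one ofLoop ▸ one_mem _, hgen (by simp [generators])]
  have hloopless := map_swapCentralizer_mem loopless (hgen (by simp [generators]))
    (hgen (by simp [generators]))
  have hlooped := map_swapCentralizer_mem looped (hgen (by simp [generators]))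
    (hgen (by simp [generators]))
  have hmixed (π : Equiv.Perm (Bool × Bool)) : mixed π ∈ Subgroup.closure generators :=
    hgen (Or.inr ⟨π, rfl⟩)
  refine (Subgroup.eq_top_iff' _).mpr fun r => ?_
  obtain ⟨⟨e, a, b, π⟩, rfl⟩ := equivProd.surjective r
  change ofLoop e * ofPairs (a, b, π) ∈ _
  rw [ofPairs_eq_mul]
  exact mul_mem (hloop e) (mul_mem (mul_mem (hloopless a) (hlooped b)) (hmixed π))

theorem fst_symmToggle (p : Bool × Bool) :
    ((symmToggle : Equiv.Perm (Bool × Bool)) p).1 = if p.1 = p.2 then !p.1 else p.1 := by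
  revert p
  decide

theorem fst_reversal (p : Bool × Bool) :
    ((reversal : Equiv.Perm (Bool × Bool)) p).1 = p.2 := rfl

theorem phi1Fn_eq_smul (G : FinDigraph) : phi1Fn G = ofLoop Equiv.boolNot • G :=
  FinDigraph.mk_eq_mk_of_adj_eq fun u v => by
    by_cases huv : u = v <;> simp [huv]

theorem phi2Fn_eq_smul (G : FinDigraph) : phi2Fn G = loopless symmToggle • G :=
  FinDigraph.mk_eq_mk_of_adj_eq fun u v => by
    by_cases huv : u = v
    · simp [huv, loopless]
    · cases G.adj u u <;> cases G.adj v v <;> simp [huv, loopless, fst_symmToggle]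

theorem phi3Fn_eq_smul (G : FinDigraph) : phi3Fn G = looped symmToggle • G :=
  FinDigraph.mk_eq_mk_of_adj_eq fun u v => by
    by_cases huv : u = v
    · simp [huv, looped]
    · cases G.adj u u <;> cases G.adj v v <;> simp [huv, looped, fst_symmToggle]

theorem phi4Fn_eq_smul (G : FinDigraph) : phi4Fn G = loopless reversal • G :=
  FinDigraph.mk_eq_mk_of_adj_eq fun u v => by
    by_cases huv : u = v
    · simp [huv, loopless]
    · cases G.adj u u <;> cases G.adj v v <;>
        simp +contextual [huv, loopless, fst_reversal]

theorem phi5Fn_eq_smul (G : FinDigraph) : phi5Fn G = looped reversal • G :=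
  FinDigraph.mk_eq_mk_of_adj_eq fun u v => by
    by_cases huv : u = v
    · simp [huv, looped]
    · cases G.adj u u <;> cases G.adj v v <;>
        simp +contextual [huv, looped, fst_reversal]

theorem phiPiFn_eq_smul (π : Equiv.Perm (Bool × Bool)) (G : FinDigraph) :
    phiPiFn π G = mixed π • G :=
  FinDigraph.mk_eq_mk_of_adj_eq fun u v => by
    by_cases huv : u = v
    · simp [huv, mixed]
    · cases G.adj u u <;> cases G.adj v v <;> simp [huv, mixed, sigmaSwap]

end Generators
end Recoding

/-- the subgroup `C` of order automorphisms of `(D, ⊑)` generated by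
`φ₁,…,φ₅` and all `φ_π` has exactly 768 elements. -/
theorem conjGroup_card_768
    (g1 g2 g3 g4 g5 : D ≃o D) (gP : Equiv.Perm (Bool × Bool) → D ≃o D)
    (h1 : ∀ G : FinDigraph, g1 (toD G) = toD (phi1Fn G))
    (h2 : ∀ G : FinDigraph, g2 (toD G) = toD (phi2Fn G))
    (h3 : ∀ G : FinDigraph, g3 (toD G) = toD (phi3Fn G))
    (h4 : ∀ G : FinDigraph, g4 (toD G) = toD (phi4Fn G))
    (h5 : ∀ G : FinDigraph, g5 (toD G) = toD (phi5Fn G))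
    (hP : ∀ (π : Equiv.Perm (Bool × Bool)) (G : FinDigraph),
      gP π (toD G) = toD (phiPiFn π G)) :
    Nat.card ↥(Subgroup.closure ({g1, g2, g3, g4, g5} ∪ Set.range gP : Set (D ≃o D)))
      = 768 := by
  have hgen : {g1, g2, g3, g4, g5} ∪ Set.range gP =
      Recoding.toOrderIso '' Recoding.generators := by
    obtain rfl : gP = Recoding.toOrderIso ∘ Recoding.mixed :=
      funext fun π => Recoding.eq_toOrderIso (hP π) (Recoding.phiPiFn_eq_smul π)
    rw [Recoding.eq_toOrderIso h1 Recoding.phi1Fn_eq_smul,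
      Recoding.eq_toOrderIso h2 Recoding.phi2Fn_eq_smul,
      Recoding.eq_toOrderIso h3 Recoding.phi3Fn_eq_smul,
      Recoding.eq_toOrderIso h4 Recoding.phi4Fn_eq_smul,
      Recoding.eq_toOrderIso h5 Recoding.phi5Fn_eq_smul, Set.range_comp]
    simp only [Recoding.generators, Set.image_union, Set.image_insert_eq, Set.image_singleton]
  rw [hgen, ← MonoidHom.map_closure, Recoding.closure_generators,
    Subgroup.card_map_of_injective Recoding.toOrderIso_injective, Subgroup.card_top,
    Recoding.card_recoding]
end

section
/- Let C be the subgroup of the group of order automorphisms of (D, ⊑) generated by φ₁, φ₂, φ₃, φ₄, φ₅ and all φ_π (π a permutation of Bool × Bool), and let S be the subgroup generated by φ₂, φ₃, φ₄, φ₅ and all φ_π. Then C is the internal semidirect product of S by the subgroup generated by φ₁; that is: S is a normal subgroup of C, S ∩ ⟨φ₁⟩ is trivial, and S·⟨φ₁⟩ = C. -/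
/-!
Conjugation by `φ₁` exchanges `φ₂` with `φ₃` and `φ₄` with `φ₅`, and sends `φ_π` to `φ_{σπσ}`, where
`σ` is the swap: complementing the loops exchanges the two ends of a pair made of a looped and a
loopless vertex. Hence `⟨φ₁⟩` normalizes `S`, and `C = S ⊔ ⟨φ₁⟩ = S·⟨φ₁⟩`. Every generator of `S`
leaves the loops alone, so `S` fixes the two one-vertex classes, whereas `φ₁` exchanges them. Thus
`φ₁ ∉ S`, and since `φ₁` has prime order `2` this already forces `S ∩ ⟨φ₁⟩` to be trivial.
-/

section Group

variable {Γ : Type*} [Group Γ]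

theorem disjoint_zpowers_of_prime_orderOf {H : Subgroup Γ} {t : Γ} (hp : (orderOf t).Prime)
    (ht : t ∉ H) : Disjoint H (Subgroup.zpowers t) := by
  have : Fact (Nat.card (Subgroup.zpowers t)).Prime := ⟨by rwa [Nat.card_zpowers]⟩
  rcases (H.subgroupOf (Subgroup.zpowers t)).eq_bot_or_eq_top_of_prime_card with hbot | htop
  · exact Subgroup.subgroupOf_eq_bot.mp hbot
  · exact absurd (Subgroup.subgroupOf_eq_top.mp htop (Subgroup.mem_zpowers t)) ht

theorem mem_normalizer_of_conj_mem_of_isOfFinOrder {s : Set Γ} {t : Γ} (ht : IsOfFinOrder t)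
    (hs : ∀ x ∈ s, t * x * t⁻¹ ∈ s) : t ∈ Subgroup.normalizer s := by
  obtain ⟨_ | n, hpos, hpow⟩ := isOfFinOrder_iff_pow_eq_one.mp ht
  · exact absurd hpos (lt_irrefl 0)
  have hinv : t ^ n = t⁻¹ := eq_inv_of_mul_eq_one_left (by rw [← pow_succ, hpow])
  have hconj (k : ℕ) : ∀ x ∈ s, t ^ k * x * (t ^ k)⁻¹ ∈ s := by
    induction k with
    | zero => simp
    | succ k ih => exact fun x hx => by simpa [pow_succ', mul_assoc] using hs _ (ih x hx)
  refine fun x => ⟨hs x, fun hx => ?_⟩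
  simpa [hinv, mul_assoc] using hconj n _ hx

end Group

open Function

theorem FinDigraph.mk_congr_adj {n : ℕ} {hn : 0 < n} {a b : Fin n → Fin n → Bool}
    (h : ∀ u v, a u v = b u v) : mk n hn a = mk n hn b :=
  congrArg (mk n hn) (funext₂ h)

section Semiconj

open FinDigraph

theorem phi1Fn_involutive : Involutive phi1Fn := by
  rintro ⟨n, hn, a⟩
  simp only [phi1Fn]
  refine mk_congr_adj fun u v => ?_
  by_cases huv : u = v <;> simp [huv]

theorem phi1Fn_semiconj_phi2Fn_phi3Fn : Semiconj phi1Fn phi2Fn phi3Fn := by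
  rintro ⟨n, hn, a⟩
  simp only [phi1Fn, phi2Fn, phi3Fn]
  refine mk_congr_adj fun u v => ?_
  by_cases huv : u = v
  · simp [huv]
  · simp [huv, Ne.symm huv]

theorem phi1Fn_semiconj_phi3Fn_phi2Fn : Semiconj phi1Fn phi3Fn phi2Fn :=
  phi1Fn_semiconj_phi2Fn_phi3Fn.inverse_left phi1Fn_involutive phi1Fn_involutive

theorem phi1Fn_semiconj_phi4Fn_phi5Fn : Semiconj phi1Fn phi4Fn phi5Fn := by
  rintro ⟨n, hn, a⟩
  simp only [phi1Fn, phi4Fn, phi5Fn]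
  refine mk_congr_adj fun u v => ?_
  by_cases huv : u = v
  · simp [huv]
  · simp [huv, Ne.symm huv]

theorem phi1Fn_semiconj_phi5Fn_phi4Fn : Semiconj phi1Fn phi5Fn phi4Fn :=
  phi1Fn_semiconj_phi4Fn_phi5Fn.inverse_left phi1Fn_involutive phi1Fn_involutive

theorem phi1Fn_semiconj_phiPiFn (π : Equiv.Perm (Bool × Bool)) :
    Semiconj phi1Fn (phiPiFn π) (phiPiFn (sigmaSwap * π * sigmaSwap)) := by
  rintro ⟨n, hn, a⟩
  simp only [phi1Fn, phiPiFn]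
  refine mk_congr_adj fun u v => ?_
  by_cases huv : u = v
  · simp [huv]
  · rcases Bool.eq_false_or_eq_true (a u u) with hu | hu <;>
      rcases Bool.eq_false_or_eq_true (a v v) with hv | hv <;>
      simp [sigmaSwap, huv, Ne.symm huv, hu, hv]

end Semiconj

namespace FinDigraph

/-- The digraph with a single vertex, looped exactly when `b` is `true`. Its class is fixed by the
generators of `S` and moved by `φ₁`. -/
def oneVertex (b : Bool) : FinDigraph := ⟨1, one_pos, fun _ _ => b⟩

variable (b : Bool)

theorem phi1Fn_oneVertex : phi1Fn (oneVertex b) = oneVertex !b :=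
  mk_congr_adj (n := 1) fun | 0, 0 => rfl

theorem phi2Fn_oneVertex : phi2Fn (oneVertex b) = oneVertex b :=
  mk_congr_adj (n := 1) fun | 0, 0 => rfl

theorem phi3Fn_oneVertex : phi3Fn (oneVertex b) = oneVertex b :=
  mk_congr_adj (n := 1) fun | 0, 0 => rfl

theorem phi4Fn_oneVertex : phi4Fn (oneVertex b) = oneVertex b :=
  mk_congr_adj (n := 1) fun | 0, 0 => rfl

theorem phi5Fn_oneVertex : phi5Fn (oneVertex b) = oneVertex b :=
  mk_congr_adj (n := 1) fun | 0, 0 => rfl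

theorem phiPiFn_oneVertex (π : Equiv.Perm (Bool × Bool)) :
    phiPiFn π (oneVertex b) = oneVertex b :=
  mk_congr_adj (n := 1) fun | 0, 0 => rfl

theorem toD_oneVertex_injective : Injective fun b => toD (oneVertex b) := fun _ _ h =>
  have ⟨_, he⟩ := Quotient.exact h
  (he (0 : Fin 1) (0 : Fin 1)).symm

end FinDigraph

/-- The automorphism `g` of `(D, ⊑)` is induced by the operation `f` on representatives, the way in
which the `φᵢ` and `φ_π` are given. In particular `f` sends isomorphic digraphs to isomorphic ones.
-/
def Induces (f : FinDigraph → FinDigraph) (g : D ≃o D) : Prop :=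
  ∀ G, g (toD G) = toD (f G)

namespace Induces

theorem conj_eq {f p q : FinDigraph → FinDigraph} {t a b : D ≃o D} (ht : Induces f t)
    (ha : Induces p a) (hb : Induces q b) (h : Semiconj f p q) : t * a * t⁻¹ = b := by
  rw [mul_inv_eq_iff_eq_mul]
  ext x
  induction x using Quotient.inductionOn with
  | h G =>
    calc t (a (toD G)) = toD (f (p G)) := by rw [ha, ht]
      _ = toD (q (f G)) := by rw [h.eq]
      _ = b (t (toD G)) := by rw [ht, hb]

theorem sq_eq_one {f : FinDigraph → FinDigraph} {t : D ≃o D} (ht : Induces f t)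
    (hf : Involutive f) : t ^ 2 = 1 := by
  ext x
  induction x using Quotient.inductionOn with
  | h G =>
    calc t (t (toD G)) = toD (f (f G)) := by rw [ht, ht]
      _ = toD G := by rw [hf]

theorem mem_stabilizer {f : FinDigraph → FinDigraph} {g : D ≃o D} {G : FinDigraph}
    (hg : Induces f g) (hG : f G = G) : g ∈ MulAction.stabilizer (D ≃o D) (toD G) :=
  (hg G).trans (congrArg toD hG)

open FinDigraph

section Generators

variable {g1 g2 g3 g4 g5 : D ≃o D} {gP : Equiv.Perm (Bool × Bool) → D ≃o D}

theorem phi1_notMem_stabilizer_oneVertex (h1 : Induces phi1Fn g1) (b : Bool) :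
    g1 ∉ MulAction.stabilizer (D ≃o D) (toD (oneVertex b)) := by
  intro hfix
  have hclass : toD (oneVertex !b) = toD (oneVertex b) := by
    rw [← phi1Fn_oneVertex, ← h1]
    exact hfix
  exact Bool.not_ne_self b (toD_oneVertex_injective hclass)

theorem orderOf_phi1 (h1 : Induces phi1Fn g1) : orderOf g1 = 2 :=
  orderOf_eq_prime (h1.sq_eq_one phi1Fn_involutive) fun h =>
    h1.phi1_notMem_stabilizer_oneVertex true (h ▸ one_mem _)

theorem generators_subset_stabilizer_oneVertex (h2 : Induces phi2Fn g2) (h3 : Induces phi3Fn g3)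
    (h4 : Induces phi4Fn g4) (h5 : Induces phi5Fn g5) (hP : ∀ π, Induces (phiPiFn π) (gP π))
    (b : Bool) :
    {g2, g3, g4, g5} ∪ Set.range gP ⊆
      (MulAction.stabilizer (D ≃o D) (toD (oneVertex b)) : Set (D ≃o D)) := by
  rintro _ ((rfl | rfl | rfl | rfl) | ⟨π, rfl⟩)
  · exact h2.mem_stabilizer (phi2Fn_oneVertex b)
  · exact h3.mem_stabilizer (phi3Fn_oneVertex b)
  · exact h4.mem_stabilizer (phi4Fn_oneVertex b)
  · exact h5.mem_stabilizer (phi5Fn_oneVertex b)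
  · exact (hP π).mem_stabilizer (phiPiFn_oneVertex b π)

theorem phi1_mem_normalizer_generators (h1 : Induces phi1Fn g1) (h2 : Induces phi2Fn g2)
    (h3 : Induces phi3Fn g3) (h4 : Induces phi4Fn g4) (h5 : Induces phi5Fn g5)
    (hP : ∀ π, Induces (phiPiFn π) (gP π)) :
    g1 ∈ Subgroup.normalizer ({g2, g3, g4, g5} ∪ Set.range gP) := by
  have hfin : IsOfFinOrder g1 :=
    isOfFinOrder_iff_pow_eq_one.mpr ⟨2, two_pos, h1.sq_eq_one phi1Fn_involutive⟩
  refine mem_normalizer_of_conj_mem_of_isOfFinOrder hfin ?_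
  rintro _ ((rfl | rfl | rfl | rfl) | ⟨π, rfl⟩)
  · simp [h1.conj_eq h2 h3 phi1Fn_semiconj_phi2Fn_phi3Fn]
  · simp [h1.conj_eq h3 h2 phi1Fn_semiconj_phi3Fn_phi2Fn]
  · simp [h1.conj_eq h4 h5 phi1Fn_semiconj_phi4Fn_phi5Fn]
  · simp [h1.conj_eq h5 h4 phi1Fn_semiconj_phi5Fn_phi4Fn]
  · simp [h1.conj_eq (hP π) (hP _) (phi1Fn_semiconj_phiPiFn π)]

end Generators

end Induces

open Pointwise in
/-- `C` is the internal semidirect product of `S` by `⟨φ₁⟩`: `S` is normal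
in `C`, `S ∩ ⟨φ₁⟩` is trivial, and `S·⟨φ₁⟩ = C`. -/
theorem internal_semidirect_product
    (g1 g2 g3 g4 g5 : D ≃o D) (gP : Equiv.Perm (Bool × Bool) → D ≃o D)
    (h1 : ∀ G : FinDigraph, g1 (toD G) = toD (phi1Fn G))
    (h2 : ∀ G : FinDigraph, g2 (toD G) = toD (phi2Fn G))
    (h3 : ∀ G : FinDigraph, g3 (toD G) = toD (phi3Fn G))
    (h4 : ∀ G : FinDigraph, g4 (toD G) = toD (phi4Fn G))
    (h5 : ∀ G : FinDigraph, g5 (toD G) = toD (phi5Fn G))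
    (hP : ∀ (π : Equiv.Perm (Bool × Bool)) (G : FinDigraph),
      gP π (toD G) = toD (phiPiFn π G))
    (C S T : Subgroup (D ≃o D))
    (hC : C = Subgroup.closure ({g1, g2, g3, g4, g5} ∪ Set.range gP : Set (D ≃o D)))
    (hS : S = Subgroup.closure ({g2, g3, g4, g5} ∪ Set.range gP : Set (D ≃o D)))
    (hT : T = Subgroup.closure {g1}) :
    S ≤ C ∧ T ≤ C ∧ (S.subgroupOf C).Normal ∧ S ⊓ T = ⊥ ∧
      (↑S * ↑T : Set (D ≃o D)) = ↑C := by
  have hsup : C = S ⊔ T := by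
    rw [hC, hS, hT, sup_comm, ← Subgroup.closure_union, ← Set.insert_eq, Set.insert_union]
  have hnorm : T ≤ Subgroup.normalizer S := by
    rw [hT, hS, Subgroup.closure_le, Set.singleton_subset_iff]
    exact Subgroup.normalizer_le_normalizer_closure _
      (Induces.phi1_mem_normalizer_generators h1 h2 h3 h4 h5 hP)
  have hfix : S ≤ MulAction.stabilizer (D ≃o D) (toD (FinDigraph.oneVertex true)) := by
    rw [hS, Subgroup.closure_le]
    exact Induces.generators_subset_stabilizer_oneVertex h2 h3 h4 h5 hP true
  have hdisj : Disjoint S T := by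
    rw [hT, ← Subgroup.zpowers_eq_closure]
    exact disjoint_zpowers_of_prime_orderOf (Induces.orderOf_phi1 h1 ▸ Nat.prime_two)
      fun hmem => Induces.phi1_notMem_stabilizer_oneVertex h1 true (hfix hmem)
  exact ⟨hsup ▸ le_sup_left, hsup ▸ le_sup_right,
    Subgroup.normal_subgroupOf_of_le_normalizer (hsup ▸ sup_le Subgroup.le_normalizer hnorm),
    hdisj.eq_bot, hsup ▸ (Subgroup.coe_mul_of_right_le_normalizer_left S T hnorm).symm⟩
end

section
/- Let S be the subgroup of the group of order automorphisms of (D, ⊑) generated by φ₂, φ₃, φ₄, φ₅ and all φ_π (π a permutation of Bool × Bool). Then S is isomorphic to (ZMod 2)⁴ × Perm(Bool × Bool); in particular S is the internal direct product of the cyclic subgroups ⟨φ₂⟩, ⟨φ₃⟩, ⟨φ₄⟩, ⟨φ₅⟩ (each of order 2) and the subgroup {φ_π : π a permutation of Bool × Bool}. -/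
/-! Choose, for any two loop statuses `c` and `d`, a permutation of the four types that a pair of
distinct vertices with these statuses can have, compatibly with listing the two vertices in
either order. Such rules form a group acting on `D` by order automorphisms. The action is
faithful: digraphs with two vertices determine a rule up to reversing the single edges between
vertices of equal loop status, and that reversal moves a star whose edges all leave the centre.

Every generator acts by a rule. For equal loop statuses, toggling symmetric pairs and reversing
single edges are disjoint involutions on the types; for different statuses any permutation is
allowed. Hence the direct product of the four groups of order two and `Perm (Bool × Bool)` embeds
in the group of rules, and thus in the automorphism group of `D`, where its factors become the
given subgroups. -/

section InternalProduct

variable {ι : Type*} [DecidableEq ι] {H : ι → Type*} [∀ i, Group (H i)] {Γ : Type*} [Group Γ]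

theorem commute_of_mem_range_comp_mulSingle (Φ : (∀ i, H i) →* Γ) {i j : ι} (hij : i ≠ j)
    {x y : Γ} (hx : x ∈ (Φ.comp (MonoidHom.mulSingle H i)).range)
    (hy : y ∈ (Φ.comp (MonoidHom.mulSingle H j)).range) : Commute x y := by
  obtain ⟨a, rfl⟩ := hx
  obtain ⟨b, rfl⟩ := hy
  exact (Pi.mulSingle_commute hij a b).map Φ

theorem iSupIndep_range_comp_mulSingle {Φ : (∀ i, H i) →* Γ} (hΦ : Function.Injective Φ) :
    iSupIndep fun i => (Φ.comp (MonoidHom.mulSingle H i)).range := by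
  intro i
  have others_le : ⨆ j, ⨆ (_ : j ≠ i), (Φ.comp (MonoidHom.mulSingle H j)).range ≤
      (Pi.evalMonoidHom H i).ker.map Φ := by
    refine iSup₂_le fun j hj => ?_
    rintro _ ⟨b, rfl⟩
    exact Subgroup.mem_map_of_mem Φ (Pi.mulSingle_eq_of_ne hj.symm b)
  refine Disjoint.mono_right others_le (Subgroup.disjoint_def.2 ?_)
  rintro _ ⟨a, rfl⟩ ⟨x, hx, hxa⟩
  have ha : a = 1 := by
    rw [← show x i = a by rw [hΦ hxa]; exact Pi.mulSingle_eq_same i a]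
    exact hx
  rw [ha, map_one]

theorem iSup_range_comp_mulSingle [Finite ι] (Φ : (∀ i, H i) →* Γ) :
    ⨆ i, (Φ.comp (MonoidHom.mulSingle H i)).range = Φ.range := by
  refine le_antisymm (iSup_le fun i => ?_) ?_
  · rintro _ ⟨a, rfl⟩
    exact ⟨Pi.mulSingle i a, rfl⟩
  rintro _ ⟨x, rfl⟩
  refine Subgroup.mem_comap.1 (Subgroup.pi_mem_of_mulSingle_mem x fun i => ?_)
  exact Subgroup.mem_iSup_of_mem i ⟨x i, rfl⟩

theorem card_range_comp_mulSingle {Φ : (∀ i, H i) →* Γ} (hΦ : Function.Injective Φ) (i : ι) :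
    Nat.card (Φ.comp (MonoidHom.mulSingle H i)).range = Nat.card (H i) :=
  Nat.card_congr (MonoidHom.ofInjective (f := Φ.comp (MonoidHom.mulSingle H i))
    (hΦ.comp (Pi.mulSingle_injective i))).symm.toEquiv

theorem range_eq_closure_singleton {G : Type*} [Group G] {a : G}
    (f : Subgroup.zpowers a →* Γ) :
    f.range = Subgroup.closure {f ⟨a, Subgroup.mem_zpowers a⟩} := by
  refine le_antisymm ?_ ((Subgroup.closure_le _).2 (Set.singleton_subset_iff.2 ⟨_, rfl⟩))
  rintro _ ⟨⟨_, n, rfl⟩, rfl⟩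
  exact Subgroup.mem_closure_singleton.2 ⟨n, (map_zpow f _ n).symm⟩

theorem range_eq_closure_range_apply_top {G : Type*} [Group G] (f : (⊤ : Subgroup G) →* Γ) :
    f.range = Subgroup.closure (Set.range fun g => f ⟨g, Subgroup.mem_top g⟩) := by
  have range_eq : (Set.range fun g => f ⟨g, Subgroup.mem_top g⟩) = (f.range : Set Γ) :=
    Subgroup.topEquiv.symm.surjective.range_comp f
  rw [range_eq, Subgroup.closure_eq]

theorem closure_insert_union_eq_iSup (a b c d : Γ) (T : Set Γ) :
    Subgroup.closure ({a, b, c, d} ∪ T) = ⨆ i, ![Subgroup.closure {a}, Subgroup.closure {b},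
      Subgroup.closure {c}, Subgroup.closure {d}, Subgroup.closure T] i := by
  simp only [Set.insert_eq, Subgroup.closure_union, sup_assoc]
  simp [← Finset.sup_univ_eq_iSup, Fin.univ_succ]

end InternalProduct

theorem orderIso_ext_toD {f g : D ≃o D} (h : ∀ G, f (toD G) = g (toD G)) : f = g :=
  DFunLike.ext _ _ fun x => Quotient.inductionOn x h

/-- A rewriting rule for pairs of distinct vertices: `ρ c d` permutes the types `(adj u v, adj v u)`
of the pairs `(u, v)` whose loop statuses are `c` and `d`. -/
abbrev PairRule : Type := Bool → Bool → Equiv.Perm (Bool × Bool)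

/-- The rewriting rules whose outcome does not depend on the order in which the two vertices of a
pair are listed. -/
def pairRules : Subgroup PairRule where
  carrier := {ρ | ∀ c d, SemiconjBy sigmaSwap (ρ c d) (ρ d c)}
  one_mem' _ _ := SemiconjBy.one_right _
  mul_mem' hρ hσ c d := (hρ c d).mul_right (hσ c d)
  inv_mem' hρ c d := (hρ c d).inv_right

theorem pairRules_apply_swap {ρ : PairRule} (hρ : ρ ∈ pairRules) (c d : Bool)
    (t : Bool × Bool) : ρ d c t.swap = (ρ c d t).swap :=
  (DFunLike.congr_fun (hρ c d) t).symm

section RecolorAdj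

variable {V W : Type*} [DecidableEq V] [DecidableEq W]

/-- The edge relation obtained from `a` by rewriting the type of every pair of distinct vertices
according to `ρ`. -/
def recolorAdj (ρ : PairRule) (a : V → V → Bool) (u v : V) : Bool :=
  if u = v then a u v else (ρ (a u u) (a v v) (a u v, a v u)).1

theorem eq_recolorAdj {ρ : PairRule} {a b : V → V → Bool} (diagonal : ∀ u, b u u = a u u)
    (off_diagonal : ∀ u v, u ≠ v → b u v = (ρ (a u u) (a v v) (a u v, a v u)).1) :
    b = recolorAdj ρ a := by
  funext u v
  obtain rfl | huv := eq_or_ne u v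
  · simp only [recolorAdj, if_true, diagonal]
  · simp only [recolorAdj, if_neg huv, off_diagonal u v huv]

theorem recolorAdj_one (a : V → V → Bool) : recolorAdj 1 a = a :=
  funext₂ fun _ _ => ite_self _

theorem recolorAdj_mul (ρ : PairRule) {σ : PairRule} (hσ : σ ∈ pairRules)
    (a : V → V → Bool) :
    recolorAdj (ρ * σ) a = recolorAdj ρ (recolorAdj σ a) := by
  funext u v
  obtain rfl | huv := eq_or_ne u v
  · simp [recolorAdj]
  · have reversed : (σ (a v v) (a u u) (a v u, a u v)).1 = (σ (a u u) (a v v) (a u v, a v u)).2 :=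
      congrArg Prod.fst (pairRules_apply_swap hσ _ _ (a u v, a v u))
    simp [recolorAdj, huv, huv.symm, reversed]

theorem recolorAdj_apply_of_injective (ρ : PairRule) {f : V → W} (hf : Function.Injective f)
    {a : V → V → Bool} {b : W → W → Bool}
    (hab : ∀ u v, b (f u) (f v) = a u v) (u v : V) :
    recolorAdj ρ b (f u) (f v) = recolorAdj ρ a u v := by
  simp only [recolorAdj, hab, hf.eq_iff]

end RecolorAdj

namespace FinDigraph

/-- The digraph obtained by rewriting the type of every pair of distinct vertices according to
`ρ`. -/
def recolor (ρ : PairRule) (G : FinDigraph) : FinDigraph :=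
  ⟨G.n, G.pos, recolorAdj ρ G.adj⟩

theorem Emb.recolor {G H : FinDigraph} (h : Emb G H) (ρ : PairRule) :
    Emb (G.recolor ρ) (H.recolor ρ) :=
  h.imp fun f hf => recolorAdj_apply_of_injective ρ f.injective hf

theorem Iso.recolor {G H : FinDigraph} (h : Iso G H) (ρ : PairRule) :
    Iso (G.recolor ρ) (H.recolor ρ) :=
  h.imp fun e he => recolorAdj_apply_of_injective ρ e.injective he

end FinDigraph

/-- The action of a rewriting rule on isomorphism classes. -/
def recolorClass (ρ : PairRule) : D → D :=
  Quotient.map (FinDigraph.recolor ρ) fun _ _ h => h.recolor ρ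

theorem recolorClass_one (x : D) : recolorClass 1 x = x :=
  Quotient.inductionOn x fun G =>
    congrArg (fun a => toD ⟨G.n, G.pos, a⟩) (recolorAdj_one G.adj)

theorem recolorClass_mul (ρ : PairRule) {σ : PairRule} (hσ : σ ∈ pairRules) (x : D) :
    recolorClass (ρ * σ) x = recolorClass ρ (recolorClass σ x) :=
  Quotient.inductionOn x fun G =>
    congrArg (fun a => toD ⟨G.n, G.pos, a⟩) (recolorAdj_mul ρ hσ G.adj)

theorem recolorClass_mono (ρ : PairRule) {x y : D} (h : x ≤ y) :
    recolorClass ρ x ≤ recolorClass ρ y := by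
  obtain ⟨G, H, rfl, rfl, hGH⟩ := h
  exact ⟨G.recolor ρ, H.recolor ρ, rfl, rfl, hGH.recolor ρ⟩

theorem recolorClass_inv_recolorClass {ρ : PairRule} (hρ : ρ ∈ pairRules) (x : D) :
    recolorClass ρ⁻¹ (recolorClass ρ x) = x := by
  rw [← recolorClass_mul ρ⁻¹ hρ, inv_mul_cancel, recolorClass_one]

/-- The order automorphism of `D` given by a rewriting rule. -/
def recolorAut : pairRules →* (D ≃o D) where
  toFun ρ :=
    { toFun := recolorClass ρ
      invFun := recolorClass ρ⁻¹
      left_inv := recolorClass_inv_recolorClass ρ.2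
      right_inv := fun x => by simpa using recolorClass_inv_recolorClass (inv_mem ρ.2) x
      map_rel_iff' := fun {x y} =>
        ⟨fun h => by
          simpa [recolorClass_inv_recolorClass ρ.2] using recolorClass_mono (ρ⁻¹ : PairRule) h,
          recolorClass_mono ρ⟩ }
  map_one' := DFunLike.ext _ _ recolorClass_one
  map_mul' ρ σ := DFunLike.ext _ _ (recolorClass_mul ρ σ.2)

/-- The digraph on two vertices with loop statuses `c`, `d` joined by the type `t`. -/
def pairDigraph (c d : Bool) (t : Bool × Bool) : FinDigraph :=
  ⟨2, two_pos, ![![c, t.1], ![t.2, d]]⟩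

theorem recolor_pairDigraph {ρ : PairRule} (hρ : ρ ∈ pairRules) (c d : Bool) (t : Bool × Bool) :
    (pairDigraph c d t).recolor ρ = pairDigraph c d (ρ c d t) := by
  have reversed : (ρ d c (t.2, t.1)).1 = (ρ c d t).2 :=
    congrArg Prod.fst (pairRules_apply_swap hρ c d t)
  refine congrArg (FinDigraph.mk 2 two_pos) (funext₂ fun u v => ?_)
  fin_cases u <;> fin_cases v <;> simp [pairDigraph, recolorAdj, reversed]

theorem eq_or_eq_swap_of_toD_pairDigraph_eq {c d : Bool} {s t : Bool × Bool}
    (h : toD (pairDigraph c d s) = toD (pairDigraph c d t)) : s = t ∨ c = d ∧ s = t.swap := by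
  obtain ⟨e, he⟩ : ∃ e : Fin 2 ≃ Fin 2, ∀ u v, (![![c, t.1], ![t.2, d]] : Fin 2 → Fin 2 → Bool)
      (e u) (e v) = (![![c, s.1], ![s.2, d]] : Fin 2 → Fin 2 → Bool) u v := Quotient.exact h
  -- Either `e` fixes both vertices and `s = t`, or it exchanges them, so `c = d` and `s = t.swap`.
  clear h
  revert c d s t e
  decide

/-- The star on three vertices with both edges leaving the centre and all loop statuses `c`. -/
def outStar (c : Bool) : FinDigraph :=
  ⟨3, three_pos, fun u v => if u = v then c else decide (u = 0)⟩

theorem toD_revFn_outStar_ne (c : Bool) : toD (revFn (outStar c)) ≠ toD (outStar c) := by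
  intro h
  obtain ⟨e, he⟩ : ∃ e : Fin 3 ≃ Fin 3, ∀ u v, (if e u = e v then c else decide (e u = 0)) =
      if v = u then c else decide (v = 0) := Quotient.exact h
  -- All edges of the reversed star enter `0`, but `e.symm 0` has edges to both other vertices.
  have eq_zero_of_ne (v : Fin 3) (hv : v ≠ e.symm 0) : v = 0 := by
    have hev : 0 ≠ e v := fun h0 => hv (by rw [h0, e.symm_apply_apply])
    simpa [hv, hev] using he (e.symm 0) v
  revert eq_zero_of_ne
  generalize e.symm 0 = u
  revert u
  decide

theorem revFn_outStar_eq_recolor {ρ : PairRule} {c : Bool} (hρ : ρ c c = sigmaSwap) :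
    revFn (outStar c) = (outStar c).recolor ρ :=
  congrArg (FinDigraph.mk 3 three_pos) <| eq_recolorAdj (fun _ => rfl) fun (u v : Fin 3) _ => by
    simp [outStar, hρ, sigmaSwap]

theorem eq_one_or_eq_sigmaSwap {σ : Equiv.Perm (Bool × Bool)} (hσ : Commute sigmaSwap σ)
    (h : ∀ t, σ t = t ∨ σ t = t.swap) : σ = 1 ∨ σ = sigmaSwap := by
  have diagonal (a : Bool) : σ (a, a) = (a, a) := (h (a, a)).elim id id
  have reversed : σ (false, true) = (σ (true, false)).swap :=
    (DFunLike.congr_fun hσ (true, false)).symm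
  refine (h (true, false)).imp (fun ht => ?_) fun ht => ?_ <;> ext1 ⟨a, b⟩ <;>
    cases a <;> cases b <;> simp [diagonal, reversed, ht, sigmaSwap]

theorem recolorAut_injective : Function.Injective recolorAut := by
  rw [injective_iff_map_eq_one]
  rintro ⟨ρ, hρ⟩ hone
  have fixes (G : FinDigraph) : toD (G.recolor ρ) = toD G := DFunLike.congr_fun hone (toD G)
  have pair (c d : Bool) (t : Bool × Bool) : ρ c d t = t ∨ c = d ∧ ρ c d t = t.swap :=
    eq_or_eq_swap_of_toD_pairDigraph_eq (recolor_pairDigraph hρ c d t ▸ fixes _)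
  refine Subtype.ext (funext₂ fun c d => ?_)
  obtain rfl | hcd := eq_or_ne c d
  · refine (eq_one_or_eq_sigmaSwap (hρ c c) fun t => (pair c c t).imp_right And.right).resolve_right
      fun hc => toD_revFn_outStar_ne c ?_
    rw [revFn_outStar_eq_recolor hc, fixes]
  · exact Equiv.ext fun t => (pair c d t).resolve_right fun h => hcd h.1

/-- The permutation of pair types underlying `φ₂` and `φ₃`: it exchanges no edge with both edges. -/
def symmToggle : Equiv.Perm (Bool × Bool) := Equiv.swap (false, false) (true, true)

theorem disjoint_symmToggle_sigmaSwap : symmToggle.Disjoint sigmaSwap := by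
  unfold Equiv.Perm.Disjoint
  decide

theorem disjoint_of_mem_zpowers {α : Type*} {f g σ τ : Equiv.Perm α} (h : f.Disjoint g)
    (hσ : σ ∈ Subgroup.zpowers f) (hτ : τ ∈ Subgroup.zpowers g) : σ.Disjoint τ := by
  obtain ⟨m, rfl⟩ := hσ
  obtain ⟨n, rfl⟩ := hτ
  exact h.zpow_disjoint_zpow m n

/-- The groups of pair-type permutations used by the powers of `φ₂`, `φ₃`, `φ₄`, `φ₅` and by the
`φ_π`, in this order. -/
def factor : Fin 5 → Subgroup (Equiv.Perm (Bool × Bool)) :=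
  ![Subgroup.zpowers symmToggle, Subgroup.zpowers symmToggle, Subgroup.zpowers sigmaSwap,
    Subgroup.zpowers sigmaSwap, ⊤]

/-- The rule assembled from one permutation in each factor: `x 0`, `x 2` act on pairs of
loopless vertices, `x 1`, `x 3` on pairs of looped ones, and `x 4` on mixed pairs with the
looped vertex listed first, which forces its conjugate by `sigmaSwap` for the other listing. -/
def factorRule (x : ∀ i, factor i) : PairRule
  | false, false => x 0 * x 2
  | true, true => x 1 * x 3
  | true, false => x 4
  | false, true => sigmaSwap * x 4 * sigmaSwap⁻¹

theorem factorRule_mem_pairRules (x : ∀ i, factor i) : factorRule x ∈ pairRules := by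
  have commute {σ τ : Equiv.Perm (Bool × Bool)} (hσ : σ ∈ Subgroup.zpowers symmToggle)
      (hτ : τ ∈ Subgroup.zpowers sigmaSwap) : Commute sigmaSwap (σ * τ) := by
    have hσ' : Commute sigmaSwap σ :=
      (disjoint_of_mem_zpowers disjoint_symmToggle_sigmaSwap hσ
        (Subgroup.mem_zpowers _)).commute.symm
    have hτ' : Commute sigmaSwap τ := by
      obtain ⟨n, rfl⟩ := hτ
      exact (Commute.refl sigmaSwap).zpow_right n
    exact hσ'.mul_right hτ'
  rintro (_ | _) (_ | _)
  · exact commute (x 0).2 (x 2).2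
  -- `sigmaSwap` is definitionally its own inverse.
  · rfl
  · exact SemiconjBy.conj_mk _ _
  · exact commute (x 1).2 (x 3).2

theorem factorRule_mul (x y : ∀ i, factor i) :
    factorRule (x * y) = factorRule x * factorRule y := by
  have commute {σ τ : Equiv.Perm (Bool × Bool)} (hσ : σ ∈ Subgroup.zpowers symmToggle)
      (hτ : τ ∈ Subgroup.zpowers sigmaSwap) : Commute σ τ :=
    (disjoint_of_mem_zpowers disjoint_symmToggle_sigmaSwap hσ hτ).commute
  funext c d
  rcases c <;> rcases d
  · exact (commute (y 0).2 (x 2).2).mul_mul_mul_comm _ _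
  · exact conj_mul.symm
  · rfl
  · exact (commute (y 1).2 (x 3).2).mul_mul_mul_comm _ _

/-- `factorRule` as a homomorphism from the product of the five factors to the rewriting rules. -/
def factorHom : (∀ i, factor i) →* pairRules :=
  MonoidHom.mk' (fun x => ⟨factorRule x, factorRule_mem_pairRules x⟩) fun x y =>
    Subtype.ext (factorRule_mul x y)

theorem factorHom_injective : Function.Injective factorHom := by
  rw [injective_iff_map_eq_one]
  intro x hx
  have rule_eq_one (c d : Bool) : factorRule x c d = 1 :=
    congrFun₂ (congrArg Subtype.val hx) c d
  have disjoint {σ τ : Equiv.Perm (Bool × Bool)} (hσ : σ ∈ Subgroup.zpowers symmToggle)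
      (hτ : τ ∈ Subgroup.zpowers sigmaSwap) : σ.Disjoint τ :=
    disjoint_of_mem_zpowers disjoint_symmToggle_sigmaSwap hσ hτ
  obtain ⟨h0, h2⟩ := (disjoint (x 0).2 (x 2).2).mul_eq_one_iff.1 (rule_eq_one false false)
  obtain ⟨h1, h3⟩ := (disjoint (x 1).2 (x 3).2).mul_eq_one_iff.1 (rule_eq_one true true)
  have h4 := rule_eq_one true false
  funext i
  apply Subtype.ext
  fin_cases i
  exacts [h0, h1, h2, h3, h4]

theorem card_zpowers_symmToggle : Nat.card (Subgroup.zpowers symmToggle) = 2 := by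
  rw [Nat.card_zpowers]
  exact orderOf_eq_prime (by decide) (by decide)

theorem card_zpowers_sigmaSwap : Nat.card (Subgroup.zpowers sigmaSwap) = 2 := by
  rw [Nat.card_zpowers]
  exact orderOf_eq_prime (by decide) (by decide)

/-- The product of the five factors as an explicit group: the four groups generated by an involution
are identified with `ZMod 2`. -/
noncomputable def factorEquiv : (∀ i, factor i) ≃*
    Multiplicative (ZMod 2 × ZMod 2 × ZMod 2 × ZMod 2) × Equiv.Perm (Bool × Bool) :=
  let toggle : Subgroup.zpowers symmToggle ≃* Multiplicative (ZMod 2) :=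
    mulEquivOfPrimeCardEq card_zpowers_symmToggle (Nat.card_zmod 2)
  let reverse : Subgroup.zpowers sigmaSwap ≃* Multiplicative (ZMod 2) :=
    mulEquivOfPrimeCardEq card_zpowers_sigmaSwap (Nat.card_zmod 2)
  { toFun x := (.ofAdd ((toggle (x 0)).toAdd, (toggle (x 1)).toAdd, (reverse (x 2)).toAdd,
      (reverse (x 3)).toAdd), x 4)
    invFun y := fun
      | 0 => toggle.symm (.ofAdd y.1.toAdd.1)
      | 1 => toggle.symm (.ofAdd y.1.toAdd.2.1)
      | 2 => reverse.symm (.ofAdd y.1.toAdd.2.2.1)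
      | 3 => reverse.symm (.ofAdd y.1.toAdd.2.2.2)
      | 4 => ⟨y.2, Subgroup.mem_top _⟩
    left_inv x := by
      funext i
      fin_cases i
      exacts [toggle.symm_apply_apply (x 0), toggle.symm_apply_apply (x 1),
        reverse.symm_apply_apply (x 2), reverse.symm_apply_apply (x 3), rfl]
    right_inv y := by simp
    map_mul' x y := Prod.ext
      (Prod.ext (map_mul toggle (x 0) (y 0)) <| Prod.ext (map_mul toggle (x 1) (y 1)) <|
        Prod.ext (map_mul reverse (x 2) (y 2)) (map_mul reverse (x 3) (y 3))) rfl }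

/-- The product of the five factors acting on `D` by order automorphisms. -/
def factorAut : (∀ i, factor i) →* (D ≃o D) := recolorAut.comp factorHom

theorem factorAut_injective : Function.Injective factorAut :=
  recolorAut_injective.comp factorHom_injective

theorem mk_ite_eq_recolor {ρ : PairRule} {c : Bool} {R : Bool → Bool → Prop} [DecidableRel R]
    {f : Bool → Bool → Bool}
    (hρ : ∀ p q a b, (if p = c ∧ q = c ∧ R a b then f a b else a) = (ρ p q (a, b)).1)
    (G : FinDigraph) :
    (⟨G.n, G.pos, fun u v =>
      if u ≠ v ∧ G.adj u u = c ∧ G.adj v v = c ∧ R (G.adj u v) (G.adj v u) then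
        f (G.adj u v) (G.adj v u)
      else G.adj u v⟩ : FinDigraph) = G.recolor ρ :=
  congrArg (FinDigraph.mk G.n G.pos) <|
    eq_recolorAdj (fun _ => if_neg fun h => h.1 rfl) fun u v huv => by
      simpa only [ne_eq, huv, not_false_eq_true, true_and] using hρ _ _ _ _

theorem factorAut_mulSingle_zero_toD (G : FinDigraph) :
    factorAut (Pi.mulSingle 0 ⟨symmToggle, Subgroup.mem_zpowers _⟩) (toD G) = toD (phi2Fn G) :=
  congrArg toD (mk_ite_eq_recolor (R := (· = ·)) (f := fun a _ => !a) (by decide) G).symm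

theorem factorAut_mulSingle_one_toD (G : FinDigraph) :
    factorAut (Pi.mulSingle 1 ⟨symmToggle, Subgroup.mem_zpowers _⟩) (toD G) = toD (phi3Fn G) :=
  congrArg toD (mk_ite_eq_recolor (R := (· = ·)) (f := fun a _ => !a) (by decide) G).symm

theorem factorAut_mulSingle_two_toD (G : FinDigraph) :
    factorAut (Pi.mulSingle 2 ⟨sigmaSwap, Subgroup.mem_zpowers _⟩) (toD G) = toD (phi4Fn G) :=
  congrArg toD (mk_ite_eq_recolor (R := (· ≠ ·)) (f := fun _ b => b) (by decide) G).symm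

theorem factorAut_mulSingle_three_toD (G : FinDigraph) :
    factorAut (Pi.mulSingle 3 ⟨sigmaSwap, Subgroup.mem_zpowers _⟩) (toD G) = toD (phi5Fn G) :=
  congrArg toD (mk_ite_eq_recolor (R := (· ≠ ·)) (f := fun _ b => b) (by decide) G).symm

theorem factorAut_mulSingle_four_toD (π : Equiv.Perm (Bool × Bool)) (G : FinDigraph) :
    factorAut (Pi.mulSingle 4 ⟨π, Subgroup.mem_top _⟩) (toD G) = toD (phiPiFn π G) := by
  refine congrArg (fun a => toD ⟨G.n, G.pos, a⟩) (Eq.symm ?_)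
  refine eq_recolorAdj (fun _ => if_pos rfl) fun u v huv => ?_
  cases G.adj u u <;> cases G.adj v v <;> simp [huv, factorHom, factorRule, sigmaSwap]

theorem range_comp_mulSingle_factor {Γ : Type*} [Group Γ] (Φ : (∀ i, factor i) →* Γ) :
    (fun i => (Φ.comp (MonoidHom.mulSingle _ i)).range) =
      ![Subgroup.closure {Φ (Pi.mulSingle 0 ⟨symmToggle, Subgroup.mem_zpowers _⟩)},
        Subgroup.closure {Φ (Pi.mulSingle 1 ⟨symmToggle, Subgroup.mem_zpowers _⟩)},
        Subgroup.closure {Φ (Pi.mulSingle 2 ⟨sigmaSwap, Subgroup.mem_zpowers _⟩)},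
        Subgroup.closure {Φ (Pi.mulSingle 3 ⟨sigmaSwap, Subgroup.mem_zpowers _⟩)},
        Subgroup.closure (Set.range fun π => Φ (Pi.mulSingle 4 ⟨π, Subgroup.mem_top π⟩))] := by
  let ψ (i : Fin 5) : factor i →* Γ := Φ.comp (MonoidHom.mulSingle (fun i => factor i) i)
  funext i
  fin_cases i
  exacts [range_eq_closure_singleton (ψ 0), range_eq_closure_singleton (ψ 1),
    range_eq_closure_singleton (ψ 2), range_eq_closure_singleton (ψ 3),
    range_eq_closure_range_apply_top (ψ 4)]

/-- `S = ⟨φ₂, φ₃, φ₄, φ₅, {φ_π}⟩` is isomorphic to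
`(ZMod 2)⁴ × Perm (Bool × Bool)`; in particular it is the internal direct product of the
cyclic subgroups `⟨φ₂⟩, ⟨φ₃⟩, ⟨φ₄⟩, ⟨φ₅⟩` (each of order 2) and the subgroup `{φ_π}`. -/
theorem S_internal_direct_product
    (g2 g3 g4 g5 : D ≃o D) (gP : Equiv.Perm (Bool × Bool) → D ≃o D)
    (h2 : ∀ G : FinDigraph, g2 (toD G) = toD (phi2Fn G))
    (h3 : ∀ G : FinDigraph, g3 (toD G) = toD (phi3Fn G))
    (h4 : ∀ G : FinDigraph, g4 (toD G) = toD (phi4Fn G))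
    (h5 : ∀ G : FinDigraph, g5 (toD G) = toD (phi5Fn G))
    (hP : ∀ (π : Equiv.Perm (Bool × Bool)) (G : FinDigraph),
      gP π (toD G) = toD (phiPiFn π G))
    (S : Subgroup (D ≃o D))
    (hS : S = Subgroup.closure ({g2, g3, g4, g5} ∪ Set.range gP : Set (D ≃o D)))
    (K : Fin 5 → Subgroup (D ≃o D))
    (hK : K = ![Subgroup.closure {g2}, Subgroup.closure {g3}, Subgroup.closure {g4},
      Subgroup.closure {g5}, Subgroup.closure (Set.range gP)]) :
    Nonempty (↥S ≃*
      Multiplicative (ZMod 2 × ZMod 2 × ZMod 2 × ZMod 2) × Equiv.Perm (Bool × Bool)) ∧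
    (Nat.card ↥(K 0) = 2 ∧ Nat.card ↥(K 1) = 2 ∧ Nat.card ↥(K 2) = 2 ∧
      Nat.card ↥(K 3) = 2) ∧
    (∀ i j : Fin 5, i ≠ j → ∀ x ∈ K i, ∀ y ∈ K j, Commute x y) ∧
    iSupIndep K ∧ (⨆ i, K i) = S := by
  have iSup_K : ⨆ i, K i = S := by rw [hK, hS, closure_insert_union_eq_iSup]
  obtain rfl := orderIso_ext_toD fun G => (h2 G).trans (factorAut_mulSingle_zero_toD G).symm
  obtain rfl := orderIso_ext_toD fun G => (h3 G).trans (factorAut_mulSingle_one_toD G).symm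
  obtain rfl := orderIso_ext_toD fun G => (h4 G).trans (factorAut_mulSingle_two_toD G).symm
  obtain rfl := orderIso_ext_toD fun G => (h5 G).trans (factorAut_mulSingle_three_toD G).symm
  obtain rfl := funext fun π => orderIso_ext_toD fun G =>
    (hP π G).trans (factorAut_mulSingle_four_toD π G).symm
  rw [← range_comp_mulSingle_factor factorAut] at hK
  have S_eq_range : S = factorAut.range := by rw [← iSup_K, hK, iSup_range_comp_mulSingle]
  have card_K (i : Fin 5) : Nat.card (K i) = Nat.card (factor i) := by
    rw [hK, card_range_comp_mulSingle factorAut_injective]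
  refine ⟨⟨(MulEquiv.subgroupCongr S_eq_range).trans
      ((MonoidHom.ofInjective factorAut_injective).symm.trans factorEquiv)⟩,
    ⟨(card_K 0).trans card_zpowers_symmToggle, (card_K 1).trans card_zpowers_symmToggle,
      (card_K 2).trans card_zpowers_sigmaSwap, (card_K 3).trans card_zpowers_sigmaSwap⟩,
    fun i j hij x hx y hy => ?_, ?_, iSup_K⟩
  · subst hK
    exact commute_of_mem_range_comp_mulSingle factorAut hij hx hy
  · rw [hK]
    exact iSupIndep_range_comp_mulSingle factorAut_injective
end
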